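/- arXiv:2004.13884 — 2 statements merged into one kernel-verified Lean document; each statement's English description precedes it below -/
import Mathlib

section
/- Let C ⊆ ℝⁿ be the convex polyhedron determined by vectors x*_1,…,x*_s ∈ ℝⁿ and scalars c_1,…,c_s, let g : ℝⁿ×ℝ^d → ℝⁿ be locally Lipschitz continuous, and let F(x,u) := N(x;C) + g(x,u). Fix x ∈ C at which PLICQ holds, u ∈ ℝ^d, and ω ∈ g(x,u) + N(x;C). Then for every w ∈ ℝⁿ and every z ∈ D*F((x,u),ω)(w) the following hold: D*N_C(x, ω − g(x,u))(w) ≠ ∅, and there exist real numbers γ_j for j ∈ I₀(w) ∪ I_>(w), with γ_j ≥ 0 whenever j ∈ I_>(w), such that z − (Σ_{j ∈ I₀(w) ∪ I_>(w)} γ_j x*_j, 0) ∈ ∂⟨w,g⟩(x,u), where I₀(w), I_>(w) are taken relative to the point x. -/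
open Filter Topology Set MeasureTheory
open scoped RealInnerProductSpace

noncomputable section

/-- The limiting (Mordukhovich) normal cone to a set `Ω` at `z`. -/
def limNormal {E : Type*} [NormedAddCommGroup E] [NormedSpace ℝ E]
    (Ω : Set E) (z : E) : Set E :=
  {v | ∃ (zk vk : ℕ → E) (tk : ℕ → ℝ) (yk : ℕ → E),
      Tendsto zk atTop (𝓝 z) ∧ Tendsto vk atTop (𝓝 v) ∧
      (∀ k, 0 ≤ tk k) ∧ (∀ k, yk k ∈ Ω) ∧
      (∀ k, ‖zk k - yk k‖ = Metric.infDist (zk k) Ω) ∧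
      (∀ k, vk k = tk k • (zk k - yk k))}

/-- The convex normal cone to a convex set `C` at `x` (empty if `x ∉ C`). -/
def convNormal {E : Type*} [NormedAddCommGroup E] [InnerProductSpace ℝ E]
    (C : Set E) (x : E) : Set E :=
  {v | x ∈ C ∧ ∀ y ∈ C, ⟪v, y - x⟫ ≤ 0}

/-- Pairing of two components into the `L²` product. -/
def pmk {E F : Type*} [NormedAddCommGroup E] [NormedAddCommGroup F]
    (a : E) (b : F) : WithLp 2 (E × F) :=
  (WithLp.equiv 2 (E × F)).symm (a, b)

/-- First component of an `L²` product element. -/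
def pfst {E F : Type*} [NormedAddCommGroup E] [NormedAddCommGroup F]
    (q : WithLp 2 (E × F)) : E := ((WithLp.equiv 2 (E × F)) q).1

/-- Second component of an `L²` product element. -/
def psnd {E F : Type*} [NormedAddCommGroup E] [NormedAddCommGroup F]
    (q : WithLp 2 (E × F)) : F := ((WithLp.equiv 2 (E × F)) q).2

/-- The coderivative of a set-valued map `G` at `(z, y) ∈ gph G`, applied to `w`. -/
def coderiv {E F : Type*} [NormedAddCommGroup E] [NormedSpace ℝ E]
    [NormedAddCommGroup F] [NormedSpace ℝ F]
    (G : E → Set F) (z : E) (y : F) (w : F) : Set E :=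
  {v | pmk v (-w) ∈ limNormal {q : WithLp 2 (E × F) | psnd q ∈ G (pfst q)} (pmk z y)}

/-- The limiting subdifferential of `h : E → ℝ` at `z`, via limiting normals to the epigraph. -/
def limSubdiff {E : Type*} [NormedAddCommGroup E] [NormedSpace ℝ E]
    (h : E → ℝ) (z : E) : Set E :=
  {v | pmk v (-1 : ℝ) ∈ limNormal {q : WithLp 2 (E × ℝ) | h (pfst q) ≤ psnd q} (pmk z (h z))}
/-- `Euc n` is the Euclidean space `ℝⁿ`. -/
abbrev Euc (n : ℕ) := EuclideanSpace ℝ (Fin n)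

/-!
Limiting normals are limits of proximal normals, so `z ∈ D*F(p, ω)(w)` is approximated by proximal
normals `v` of `gph F` at nearby points `y`. Perturbing the second component of `y` shows that the
second component of `v` is a critical direction of the polyhedron at `ν = ω - g p`, and critical
directions are exactly what produces proximal normals of `gph N(·; C)`; this makes the coderivative
of the normal cone map nonempty. Moving `y` along the directions in which `ν` remains a normal of
`C` shows that `z` is an `ε`-subgradient of `⟪w, g⟫`, tested along these directions only. Near
zero they contain the fixed cone polar to the admissible multiplier combinations, so a fuzzy sum
rule (a penalty minimisation decoupling `g` from the cone) splits `z` into a limiting subgradient of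
`⟪w, g⟫` and a vector polar to that cone, which Farkas' lemma writes as a multiplier combination.
-/

section ElementaryInequalities

theorem le_of_eventually_le_add_mul {a b c : ℝ} (h : ∀ᶠ t in 𝓝[>] (0 : ℝ), a ≤ b + t * c) :
    a ≤ b := by
  have hlim : Tendsto (fun t : ℝ => b + t * c) (𝓝[>] 0) (𝓝 b) := by
    have hcont : Continuous fun t : ℝ => b + t * c := by fun_prop
    simpa using (hcont.tendsto 0).mono_left nhdsWithin_le_nhds
  exact ge_of_tendsto hlim h

theorem eventually_nhdsGT_smul_mem {E : Type*} [NormedAddCommGroup E] [NormedSpace ℝ E]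
    {s : Set E} (hs : s ∈ 𝓝 0) (v : E) : ∀ᶠ t in 𝓝[>] (0 : ℝ), t • v ∈ s := by
  have hcont : Continuous fun t : ℝ => t • v := by fun_prop
  have hlim : Tendsto (fun t : ℝ => t • v) (𝓝 0) (𝓝 0) := by simpa using hcont.tendsto 0
  exact nhdsWithin_le_nhds (hlim hs)

end ElementaryInequalities

section Farkas

theorem sum_insert_update_smul {R M ι : Type*} [Semiring R] [AddCommMonoid M] [Module R M]
    [DecidableEq ι] {a : ι} {S : Finset ι} (ha : a ∉ S) (γ : ι → R) (b : R) (f : ι → M) :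
    ∑ i ∈ insert a S, Function.update γ a b i • f i = b • f a + ∑ i ∈ S, γ i • f i := by
  rw [Finset.sum_insert ha, Function.update_self]
  congr 1
  exact Finset.sum_congr rfl fun i hi => by
    rw [Function.update_of_ne (ne_of_mem_of_not_mem hi ha)]

variable {K M ι : Type*} [Field K] [AddCommGroup M] [Module K M]

theorem eq_sum_insert_update_of_sub_smul_eq_sum [DecidableEq ι] {a : ι} {S : Finset ι} (ha : a ∉ S)
    {f : ι → Module.Dual K M} {φ : Module.Dual K M} {γ : ι → K} {y : M}
    (hφ : φ - (φ y / f a y) • f a = ∑ i ∈ S, γ i • (f i - (f i y / f a y) • f a)) :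
    φ = ∑ i ∈ insert a S,
      Function.update γ a ((φ y - ∑ i ∈ S, γ i * f i y) / f a y) i • f i := by
  refine (sub_eq_iff_eq_add.1 hφ).trans ?_
  rw [sum_insert_update_smul ha]
  simp only [smul_sub, Finset.sum_sub_distrib, sub_smul, Finset.sum_smul, smul_smul, sub_div,
    Finset.sum_div, mul_div_assoc]
  abel

variable [LinearOrder K] [IsStrictOrderedRing K]

/- Induction on `S`. If the constraint `i = a` cannot be dropped, some `y` violates `φ y ≤ 0` but
satisfies all other constraints; the projection onto `ker (f a)` along `y` then eliminates `a`. -/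
theorem farkas (T : Set ι) (S : Finset ι) (f : ι → Module.Dual K M) (φ : Module.Dual K M)
    (h : ∀ x, (∀ i ∈ S, f i x ≤ 0 ∧ (i ∈ T → f i x = 0)) → φ x ≤ 0) :
    ∃ γ : ι → K, (∀ i ∈ S, i ∉ T → 0 ≤ γ i) ∧ φ = ∑ i ∈ S, γ i • f i := by
  classical
  induction S using Finset.induction_on generalizing f φ with
  | empty =>
    refine ⟨0, by simp, LinearMap.ext fun x => le_antisymm (by simpa using h x) ?_⟩
    simpa using h (-x)
  | insert a S ha ih =>
    by_cases hdrop : ∀ x, (∀ i ∈ S, f i x ≤ 0 ∧ (i ∈ T → f i x = 0)) → φ x ≤ 0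
    · obtain ⟨γ, hγ, rfl⟩ := ih f φ hdrop
      refine ⟨Function.update γ a 0, fun i hi hiT => ?_, ?_⟩
      · rcases eq_or_ne i a with rfl | hia
        · simp
        · simpa [hia] using hγ i (Finset.mem_of_mem_insert_of_ne hi hia) hiT
      · rw [sum_insert_update_smul ha, zero_smul, zero_add]
    push Not at hdrop
    obtain ⟨y, hyS, hφy⟩ := hdrop
    have hay : ¬(f a y ≤ 0 ∧ (a ∈ T → f a y = 0)) := fun hay =>
      hφy.not_ge (h y ((Finset.forall_mem_insert _ _ _).2 ⟨hay, hyS⟩))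
    have hay0 : f a y ≠ 0 := fun h0 => hay ⟨h0.le, fun _ => h0⟩
    obtain ⟨γ, hγ, hφ⟩ := ih (fun i => f i - (f i y / f a y) • f a) (φ - (φ y / f a y) • f a)
      fun x hx => by
        have := h (x - (f a x / f a y) • y) fun i hi => by
          rcases Finset.mem_insert.1 hi with rfl | hi
          · simp [hay0]
          · simpa [div_eq_mul_inv, mul_comm, mul_left_comm] using hx i hi
        simpa [div_eq_mul_inv, mul_comm, mul_left_comm] using this
    refine ⟨Function.update γ a ((φ y - ∑ i ∈ S, γ i * f i y) / f a y), fun i hi hiT => ?_, ?_⟩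
    · rcases eq_or_ne i a with rfl | hia
      · have hiy : 0 < f i y := by simpa [hiT] using hay
        have hsum : ∑ j ∈ S, γ j * f j y ≤ 0 := Finset.sum_nonpos fun j hj => by
          by_cases hjT : j ∈ T
          · simp [(hyS j hj).2 hjT]
          · exact mul_nonpos_of_nonneg_of_nonpos (hγ j hj hjT) (hyS j hj).1
        rw [Function.update_self]
        exact div_nonneg (by linarith) hiy.le
      · simpa [hia] using hγ i (Finset.mem_of_mem_insert_of_ne hi hia) hiT
    · exact eq_sum_insert_update_of_sub_smul_eq_sum ha hφ

end Farkas

section ProximalNormals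

variable {E : Type*} [NormedAddCommGroup E] [InnerProductSpace ℝ E] {Ω : Set E} {y v : E}

/-- Proximal normals `v` to `Ω` at `y ∈ Ω`, by the local quadratic inequality. They are the
directions of projection onto `Ω`, and limiting normals are their limits. -/
def IsProximalNormal (Ω : Set E) (y v : E) : Prop :=
  y ∈ Ω ∧ ∃ σ : ℝ, ∀ᶠ q in 𝓝[Ω] y, ⟪v, q - y⟫ ≤ σ * ‖q - y‖ ^ 2

theorem IsProximalNormal.of_norm_sub_eq_infDist {x : E} {t : ℝ} (hy : y ∈ Ω)
    (hxy : ‖x - y‖ = Metric.infDist x Ω) (ht : 0 ≤ t) : IsProximalNormal Ω y (t • (x - y)) := by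
  refine ⟨hy, t / 2, eventually_mem_nhdsWithin.mono fun q hq => ?_⟩
  have hdist : ‖x - y‖ ^ 2 ≤ ‖(x - y) - (q - y)‖ ^ 2 := by
    rw [sub_sub_sub_cancel_right]
    gcongr
    exact hxy ▸ dist_eq_norm x q ▸ Metric.infDist_le_dist_of_mem hq
  rw [norm_sub_sq_real (x - y) (q - y)] at hdist
  rw [real_inner_smul_left]
  linarith [mul_le_mul_of_nonneg_left
    (show 2 * ⟪x - y, q - y⟫ ≤ ‖q - y‖ ^ 2 by linarith) ht]

theorem IsProximalNormal.inner_nonpos {d : E} (h : IsProximalNormal Ω y v)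
    (hd : ∀ᶠ t in 𝓝[>] (0 : ℝ), y + t • d ∈ Ω) : ⟪v, d⟫ ≤ 0 := by
  obtain ⟨-, σ, hσ⟩ := h
  have hlim : Tendsto (fun t : ℝ => y + t • d) (𝓝[>] 0) (𝓝[Ω] y) := by
    have hcont : Continuous fun t : ℝ => y + t • d := by fun_prop
    exact tendsto_nhdsWithin_iff.2
      ⟨by simpa using (hcont.tendsto 0).mono_left nhdsWithin_le_nhds, hd⟩
  refine le_of_eventually_le_add_mul (c := σ * ‖d‖ ^ 2) ?_
  filter_upwards [hlim.eventually hσ, self_mem_nhdsWithin] with t hle ht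
  rw [add_sub_cancel_left, real_inner_smul_right, norm_smul, mul_pow, Real.norm_eq_abs,
    sq_abs] at hle
  refine le_of_mul_le_mul_left ?_ (mem_Ioi.1 ht)
  linarith

theorem IsProximalNormal.eventually_infDist_add_smul (h : IsProximalNormal Ω y v) :
    ∀ᶠ t in 𝓝[>] (0 : ℝ), Metric.infDist (y + t • v) Ω = ‖t • v‖ := by
  obtain ⟨hy, σ, hσ⟩ := h
  obtain ⟨δ, hδ, hprox⟩ := Metric.mem_nhdsWithin_iff.1 hσ
  have hσt : ∀ᶠ t in 𝓝[>] (0 : ℝ), t * (2 * σ) < 1 :=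
    eventually_nhdsGT_smul_mem (Iio_mem_nhds one_pos) (2 * σ)
  have hvt : ∀ᶠ t in 𝓝[>] (0 : ℝ), t • v ∈ Metric.ball 0 (δ / 2) :=
    eventually_nhdsGT_smul_mem (Metric.ball_mem_nhds 0 (half_pos hδ)) v
  filter_upwards [hσt, hvt, self_mem_nhdsWithin] with t hσt hvt ht
  rw [mem_ball_zero_iff] at hvt
  refine le_antisymm ?_ ((Metric.le_infDist ⟨y, hy⟩).2 fun q hq => ?_)
  · simpa using Metric.infDist_le_dist_of_mem (x := y + t • v) hy
  rw [dist_eq_norm, show y + t • v - q = t • v - (q - y) by abel]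
  by_cases hqy : ‖q - y‖ < δ
  · refine le_of_sq_le_sq ?_ (norm_nonneg _)
    have hinner : t * ⟪v, q - y⟫ ≤ t * (σ * ‖q - y‖ ^ 2) :=
      mul_le_mul_of_nonneg_left (hprox ⟨mem_ball_iff_norm.2 hqy, hq⟩) (le_of_lt ht)
    rw [norm_sub_sq_real, real_inner_smul_left]
    nlinarith [mul_le_mul_of_nonneg_right hσt.le (sq_nonneg ‖q - y‖)]
  · have := norm_sub_norm_le (q - y) (t • v)
    rw [norm_sub_rev (t • v)]
    linarith

theorem mem_limNormal_of_mem_closure {z : E}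
    (h : (z, v) ∈ closure {q : E × E | IsProximalNormal Ω q.1 q.2}) : v ∈ limNormal Ω z := by
  obtain ⟨q, hq, hlim⟩ := mem_closure_iff_seq_limit.1 h
  have hstep (k : ℕ) : ∃ t : ℝ, Metric.infDist ((q k).1 + t • (q k).2) Ω = ‖t • (q k).2‖ ∧
      t • (q k).2 ∈ Metric.ball 0 (1 / ((k : ℝ) + 1)) ∧ t ∈ Ioi 0 :=
    ((hq k).eventually_infDist_add_smul.and ((eventually_nhdsGT_smul_mem
      (Metric.ball_mem_nhds 0 (by positivity)) _).and eventually_mem_nhdsWithin)).exists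
  choose t hdist hsmall htpos using hstep
  have hzero : Tendsto (fun k => t k • (q k).2) atTop (𝓝 0) :=
    squeeze_zero_norm (fun k => (mem_ball_zero_iff.1 (hsmall k)).le)
      tendsto_one_div_add_atTop_nhds_zero_nat
  refine ⟨fun k => (q k).1 + t k • (q k).2, fun k => (q k).2, fun k => (t k)⁻¹,
    fun k => (q k).1, ?_, hlim.snd_nhds, fun k => inv_nonneg.2 (le_of_lt (htpos k)),
    fun k => (hq k).1, fun k => ?_, fun k => ?_⟩
  · simpa using hlim.fst_nhds.add hzero
  · simpa using (hdist k).symm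
  · rw [add_sub_cancel_left, inv_smul_smul₀ (ne_of_gt (htpos k))]

theorem mem_closure_isProximalNormal_of_mem_limNormal {z : E} (hz : z ∈ Ω)
    (hv : v ∈ limNormal Ω z) :
    (z, v) ∈ closure {q : E × E | IsProximalNormal Ω q.1 q.2} := by
  obtain ⟨x, v', t, y, hx, hv', ht, hy, hdist, hv_eq⟩ := hv
  have hxy : Tendsto (fun k => x k - y k) atTop (𝓝 0) :=
    squeeze_zero_norm
      (fun k => hdist k ▸ Metric.infDist_le_dist_of_mem hz) (tendsto_iff_dist_tendsto_zero.1 hx)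
  have hyz : Tendsto y atTop (𝓝 z) := by simpa using hx.sub hxy
  refine mem_closure_of_tendsto (hyz.prodMk_nhds hv') (Eventually.of_forall fun k => ?_)
  exact hv_eq k ▸ .of_norm_sub_eq_infDist (hy k) (hdist k) (ht k)

end ProximalNormals

section ProximalSubgradients

variable {E : Type*} [NormedAddCommGroup E] [InnerProductSpace ℝ E] {h : E → ℝ} {p v : E}

/-- Proximal subgradients `v` of `h` at `p`: up to a quadratic error, `h` has the affine minorant
of slope `v` near `p`. Limiting subgradients of continuous functions are limits of these. -/
def IsProximalSubgradient (h : E → ℝ) (p v : E) : Prop :=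
  ∃ σ : ℝ, ∀ᶠ q in 𝓝 p, ⟪v, q - p⟫ ≤ h q - h p + σ * ‖q - p‖ ^ 2

theorem IsProximalSubgradient.isProximalNormal_epigraph (hv : IsProximalSubgradient h p v) :
    IsProximalNormal {q : WithLp 2 (E × ℝ) | h (pfst q) ≤ psnd q} (pmk p (h p)) (pmk v (-1)) := by
  obtain ⟨σ, hσ⟩ := hv
  refine ⟨le_refl (h p), |σ|, ?_⟩
  have hfst : Tendsto pfst (𝓝 (pmk p (h p))) (𝓝 p) :=
    (WithLp.continuous_fst 2 E ℝ).tendsto (pmk p (h p))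
  filter_upwards [nhdsWithin_le_nhds (hfst.eventually hσ), self_mem_nhdsWithin] with q hq hq_epi
  have hnorm : ‖pfst q - p‖ ≤ ‖q - pmk p (h p)‖ := WithLp.norm_fst_le _ (q - pmk p (h p))
  calc ⟪pmk v (-1), q - pmk p (h p)⟫
      = ⟪v, pfst q - p⟫ + ⟪(-1 : ℝ), psnd q - h p⟫ := rfl
    _ = ⟪v, pfst q - p⟫ - (psnd q - h p) := by simp [sub_eq_add_neg]
    _ ≤ σ * ‖pfst q - p‖ ^ 2 := by linarith [show h (pfst q) ≤ psnd q from hq_epi]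
    _ ≤ |σ| * ‖q - pmk p (h p)‖ ^ 2 := by
      gcongr
      exact le_abs_self σ

theorem mem_limSubdiff_of_mem_closure (hh : ContinuousAt h p)
    (hv : (p, v) ∈ closure {q : E × E | IsProximalSubgradient h q.1 q.2}) : v ∈ limSubdiff h p := by
  let lift : E × E → WithLp 2 (E × ℝ) × WithLp 2 (E × ℝ) :=
    fun q => (pmk q.1 (h q.1), pmk q.2 (-1))
  have hpmk : Continuous fun q : E × ℝ => pmk q.1 q.2 := WithLp.prod_continuous_toLp 2 E ℝ
  have hh' : ContinuousAt (fun q : E × E => h q.1) (p, v) :=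
    ContinuousAt.comp (f := Prod.fst) hh continuousAt_fst
  have hlift : ContinuousAt lift (p, v) :=
    (hpmk.continuousAt.comp (continuousAt_fst.prodMk hh')).prodMk
      (hpmk.continuousAt.comp (continuousAt_snd.prodMk continuousAt_const))
  refine mem_limNormal_of_mem_closure (closure_mono ?_ (mem_closure_image (f := lift) hlift hv))
  rintro _ ⟨q, hq, rfl⟩
  exact hq.isProximalNormal_epigraph

end ProximalSubgradients

section FuzzySumRule

variable {V : Type*} [NormedAddCommGroup V] {f : V → ℝ} {K : NNReal} {ρ ε M : ℝ} {a b : V}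

/-- The decoupled penalty function of the fuzzy sum rule: the first variable is free, the second
is to be constrained to a cone, and `M` penalises their distance. -/
def coupledPenalty (f : V → ℝ) (ε M : ℝ) (q : V × V) : ℝ :=
  f q.1 + 2 * ε * ‖q.2‖ + M * ‖q.1 - q.2‖ ^ 2

theorem mul_norm_add_mul_norm_sub_sq_le_of_coupledPenalty_le
    (hf : LipschitzOnWith K f (Metric.closedBall 0 ρ)) (ha : ‖a‖ ≤ ρ) (hb : ‖b‖ ≤ ρ)
    (hfb : f 0 ≤ f b + ε * ‖b‖) (hab : coupledPenalty f ε M (a, b) ≤ f 0) :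
    ε * ‖b‖ + M * ‖a - b‖ ^ 2 ≤ K * ‖a - b‖ := by
  have hlip : f b - f a ≤ K * ‖a - b‖ := by
    have := hf.dist_le_mul b (mem_closedBall_zero_iff.2 hb) a (mem_closedBall_zero_iff.2 ha)
    rw [Real.dist_eq, dist_eq_norm, norm_sub_rev] at this
    exact (le_abs_self _).trans this
  simp only [coupledPenalty] at hab
  linarith

theorem norm_lt_of_mul_norm_add_mul_norm_sub_sq_le (hε : 0 < ε) (hM : 0 < M)
    (hKM : K / M < ρ / 2) (hKKM : K * K / M < ε * (ρ / 2))
    (hab : ε * ‖b‖ + M * ‖a - b‖ ^ 2 ≤ K * ‖a - b‖) :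
    M * ‖a - b‖ ≤ K ∧ ‖a‖ < ρ ∧ ‖b‖ < ρ := by
  have hMab : M * ‖a - b‖ ≤ K := by
    rcases (norm_nonneg (a - b)).eq_or_lt with h0 | hpos
    · simp [← h0]
    · refine le_of_mul_le_mul_right ?_ hpos
      linarith [mul_nonneg hε.le (norm_nonneg b)]
  have hdist : ‖a - b‖ ≤ K / M := by rwa [le_div_iff₀' hM]
  have hb : ‖b‖ < ρ / 2 := by
    refine lt_of_mul_lt_mul_left (hKKM.trans_le' ?_) hε.le
    calc ε * ‖b‖ ≤ K * ‖a - b‖ := by linarith [mul_nonneg hM.le (sq_nonneg ‖a - b‖)]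
      _ ≤ K * (K / M) := by gcongr
      _ = K * K / M := by ring
  have ha : ‖a‖ ≤ ‖a - b‖ + ‖b‖ := by simpa using norm_add_le (a - b) b
  exact ⟨hMab, by linarith, by linarith [norm_nonneg b]⟩

variable [InnerProductSpace ℝ V] {Q : ProperCone ℝ V}

theorem exists_isMinOn_coupledPenalty [FiniteDimensional ℝ V]
    (hf : LipschitzOnWith K f (Metric.closedBall 0 ρ)) (hρ : 0 < ρ) (hε : 0 < ε)
    (hmin : ∀ b ∈ Q, ‖b‖ ≤ ρ → f 0 ≤ f b + ε * ‖b‖) :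
    ∃ (M : ℝ) (a b : V), 0 < M ∧ M * ‖a - b‖ ≤ K ∧ ‖a‖ < ρ ∧ ‖b‖ < ρ ∧ b ∈ Q ∧
      IsMinOn (coupledPenalty f ε M)
        (Metric.closedBall 0 ρ ×ˢ (Metric.closedBall 0 ρ ∩ Q)) (a, b) := by
  obtain ⟨M, hKM, hKKM, hM⟩ : ∃ M : ℝ, K / M < ρ / 2 ∧ K * K / M < ε * (ρ / 2) ∧ 0 < M :=
    (((tendsto_id.const_div_atTop _).eventually_lt_const (half_pos hρ)).and
      (((tendsto_id.const_div_atTop _).eventually_lt_const (mul_pos hε (half_pos hρ))).and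
        (eventually_gt_atTop 0))).exists
  have hcompact :
      IsCompact (Metric.closedBall (0 : V) ρ ×ˢ (Metric.closedBall 0 ρ ∩ (Q : Set V))) :=
    (isCompact_closedBall _ _).prod ((isCompact_closedBall _ _).inter_right Q.isClosed)
  have hzero : ((0 : V), (0 : V)) ∈
      Metric.closedBall (0 : V) ρ ×ˢ (Metric.closedBall 0 ρ ∩ (Q : Set V)) := by
    simp [hρ.le]
  have hcont : ContinuousOn (coupledPenalty f ε M)
      (Metric.closedBall 0 ρ ×ˢ (Metric.closedBall 0 ρ ∩ Q)) := by
    have hf_fst := hf.continuousOn.comp continuousOn_fst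
      (mapsTo_fst_prod (t := Metric.closedBall 0 ρ ∩ (Q : Set V)))
    exact (hf_fst.add (by fun_prop)).add (by fun_prop)
  obtain ⟨⟨a, b⟩, ⟨ha, hb, hbQ⟩, hab⟩ := hcompact.exists_isMinOn ⟨_, hzero⟩ hcont
  rw [mem_closedBall_zero_iff] at ha hb
  have hab0 : coupledPenalty f ε M (a, b) ≤ f 0 := by simpa [coupledPenalty] using hab hzero
  obtain ⟨hMab, haρ, hbρ⟩ := norm_lt_of_mul_norm_add_mul_norm_sub_sq_le hε hM hKM hKKM
    (mul_norm_add_mul_norm_sub_sq_le_of_coupledPenalty_le hf ha hb (hmin b hbQ hb) hab0)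
  exact ⟨M, a, b, hM, hMab, haρ, hbρ, hbQ, hab⟩

theorem inner_le_of_isMinOn_coupledPenalty (hε : 0 ≤ ε) (ha : ‖a‖ < ρ) (hb : ‖b‖ < ρ)
    (hbQ : b ∈ Q) (hmin : IsMinOn (coupledPenalty f ε M)
      (Metric.closedBall 0 ρ ×ˢ (Metric.closedBall 0 ρ ∩ Q)) (a, b)) {e : V} (he : e ∈ Q) :
    ⟪(2 * M) • (a - b), e⟫ ≤ 2 * ε * ‖e‖ := by
  refine le_of_eventually_le_add_mul (c := M * ‖e‖ ^ 2) ?_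
  have hball : (fun v => b + v) ⁻¹' Metric.closedBall 0 ρ ∈ 𝓝 0 :=
    (continuous_const_add b).continuousAt.preimage_mem_nhds
      (by simpa using Metric.closedBall_mem_nhds_of_mem (mem_ball_zero_iff.2 hb))
  filter_upwards [eventually_nhdsGT_smul_mem hball e, self_mem_nhdsWithin] with t hte ht
  have ht0 : 0 < t := ht
  have hle := hmin (show (a, b + t • e) ∈ _ from
    ⟨mem_closedBall_zero_iff.2 ha.le, hte, add_mem hbQ (Q.smul_mem he ht0.le)⟩)
  simp only [coupledPenalty, mem_ofPred_eq, ← sub_sub a b, norm_sub_sq_real (a - b),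
    norm_smul, Real.norm_of_nonneg ht0.le, real_inner_smul_right] at hle
  have hnorm : ε * ‖b + t • e‖ ≤ ε * (‖b‖ + t * ‖e‖) := by
    gcongr
    simpa [norm_smul, abs_of_pos ht0] using norm_add_le b (t • e)
  rw [real_inner_smul_left]
  refine le_of_mul_le_mul_left ?_ ht0
  linarith

theorem isProximalSubgradient_of_isMinOn_coupledPenalty (ha : ‖a‖ < ρ) (hb : ‖b‖ < ρ)
    (hbQ : b ∈ Q) (hmin : IsMinOn (coupledPenalty f ε M)
      (Metric.closedBall 0 ρ ×ˢ (Metric.closedBall 0 ρ ∩ Q)) (a, b)) :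
    IsProximalSubgradient f a (-((2 * M) • (a - b))) := by
  refine ⟨M, ?_⟩
  filter_upwards [Metric.closedBall_mem_nhds_of_mem (mem_ball_zero_iff.2 ha)] with q hq
  have hle := hmin (show (q, b) ∈ _ from ⟨hq, mem_closedBall_zero_iff.2 hb.le, hbQ⟩)
  simp only [coupledPenalty, mem_ofPred_eq] at hle
  have hexpand := norm_add_sq_real (a - b) (q - a)
  rw [show a - b + (q - a) = q - b by abel] at hexpand
  rw [inner_neg_left, real_inner_smul_left]
  linear_combination hle + M * hexpand

theorem IsProximalSubgradient.add_inner {h : V → ℝ} {p z v : V}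
    (hv : IsProximalSubgradient (fun e => h (p + e) - ⟪z, e⟫) a v) :
    IsProximalSubgradient h (p + a) (z + v) := by
  obtain ⟨σ, hσ⟩ := hv
  have hshift : Tendsto (fun q => q - p) (𝓝 (p + a)) (𝓝 a) := by
    simpa using (continuous_sub_right p).tendsto (p + a)
  refine ⟨σ, (hshift.eventually hσ).mono fun q hq => ?_⟩
  simp only [add_sub_cancel, sub_sub] at hq
  have hsplit : ⟪z, q - (p + a)⟫ = ⟪z, q - p⟫ - ⟪z, a⟫ := by rw [← sub_sub, inner_sub_right]
  rw [inner_add_left, hsplit]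
  linarith

/-- `z` is an `ε`-subgradient of `h` at `p` tested only with directions from `Q`. -/
def IsEpsSubgradientAlong (Q : Set V) (h : V → ℝ) (ε : ℝ) (p z : V) : Prop :=
  ∀ᶠ e in 𝓝[Q] 0, ⟪z, e⟫ ≤ h (p + e) - h p + ε * ‖e‖

theorem IsEpsSubgradientAlong.mono {Q Q' : Set V} {h : V → ℝ} {p z : V}
    (hz : IsEpsSubgradientAlong Q h ε p z) (hQ : Q ∈ 𝓝[Q'] 0) :
    IsEpsSubgradientAlong Q' h ε p z :=
  hz.filter_mono (nhdsWithin_le_iff.2 hQ)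

variable [FiniteDimensional ℝ V] {h : V → ℝ} {U W : Set V} {p z : V}

theorem IsEpsSubgradientAlong.exists_isProximalSubgradient_sub
    (hz : IsEpsSubgradientAlong Q h ε p z) (hε : 0 < ε) (hU : U ∈ 𝓝 p)
    (hh : LipschitzOnWith K h U) (hW : W ∈ 𝓝 p) :
    ∃ q ∈ W, ∃ r, ‖r‖ ≤ 2 * (K + ‖z‖) ∧ (∀ e ∈ Q, ⟪r, e⟫ ≤ 2 * ε * ‖e‖) ∧
      IsProximalSubgradient h q (z - r) := by
  have hshift : Tendsto (fun e => p + e) (𝓝 0) (𝓝 p) := by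
    simpa using (continuous_const_add p).tendsto 0
  obtain ⟨ρ, hρ, hball⟩ := Metric.nhds_basis_closedBall.eventually_iff.1
    ((hshift.eventually (inter_mem hU hW)).and (eventually_nhdsWithin_iff.1 hz))
  have hlip : LipschitzOnWith (K + ‖z‖₊) (fun e => h (p + e) - ⟪z, e⟫) (Metric.closedBall 0 ρ) := by
    have hinner : LipschitzWith ‖z‖₊ fun e => ⟪z, e⟫ := LipschitzWith.of_dist_le_mul fun e e' => by
      rw [Real.dist_eq, dist_eq_norm, ← inner_sub_right]
      exact abs_real_inner_le_norm z (e - e')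
    have hcomp := hh.comp (f := fun e => p + e) ((isometry_add_left p).lipschitz.lipschitzOnWith
      (s := Metric.closedBall 0 ρ)) fun e he => (hball he).1.1
    simpa using hcomp.sub hinner.lipschitzOnWith
  have hmin : ∀ b ∈ Q, ‖b‖ ≤ ρ → h (p + 0) - ⟪z, 0⟫ ≤ h (p + b) - ⟪z, b⟫ + ε * ‖b‖ :=
    fun b hbQ hb => by
      have := (hball (mem_closedBall_zero_iff.2 hb)).2 hbQ
      simp only [add_zero, inner_zero_right]
      linarith
  obtain ⟨M, a, b, hM, hMab, ha, hb, hbQ, hab⟩ := exists_isMinOn_coupledPenalty hlip hρ hε hmin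
  refine ⟨p + a, (hball (mem_closedBall_zero_iff.2 ha.le)).1.2, (2 * M) • (a - b), ?_, fun e he =>
    inner_le_of_isMinOn_coupledPenalty hε.le ha hb hbQ hab he, ?_⟩
  · rw [norm_smul, Real.norm_of_nonneg (by positivity)]
    push_cast at hMab
    linarith
  · rw [sub_eq_add_neg]
    exact (isProximalSubgradient_of_isMinOn_coupledPenalty ha hb hbQ hab).add_inner

theorem exists_sub_mem_limSubdiff (hU : U ∈ 𝓝 p) (hh : LipschitzOnWith K h U)
    (hz : ∀ ε > 0, ∃ᶠ q in 𝓝 p, IsEpsSubgradientAlong Q h ε q z) :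
    ∃ r, (∀ e ∈ Q, ⟪r, e⟫ ≤ 0) ∧ z - r ∈ limSubdiff h p := by
  have hstep (k : ℕ) : ∃ q ∈ Metric.ball p (1 / ((k : ℝ) + 1)), ∃ r, ‖r‖ ≤ 2 * (K + ‖z‖) ∧
      (∀ e ∈ Q, ⟪r, e⟫ ≤ 2 * (1 / ((k : ℝ) + 1)) * ‖e‖) ∧ IsProximalSubgradient h q (z - r) := by
    have hk : 0 < 1 / ((k : ℝ) + 1) := by positivity
    obtain ⟨q, hq, hUq, hWq⟩ := ((hz _ hk).and_eventually ((eventually_mem_nhds_iff.2 hU).and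
      (eventually_mem_nhds_iff.2 (Metric.ball_mem_nhds p hk)))).exists
    exact hq.exists_isProximalSubgradient_sub hk hUq hh hWq
  choose q hqp r hr hrQ hprox using hstep
  have hlim := tendsto_one_div_add_atTop_nhds_zero_nat (𝕜 := ℝ)
  have hqlim : Tendsto q atTop (𝓝 p) :=
    tendsto_iff_dist_tendsto_zero.2 (squeeze_zero (fun _ => dist_nonneg) (fun k => (hqp k).le) hlim)
  obtain ⟨r₀, -, φ, hφ, hrlim⟩ := (isCompact_closedBall (0 : V) (2 * (K + ‖z‖))).tendsto_subseq
    fun k => mem_closedBall_zero_iff.2 (hr k)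
  refine ⟨r₀, fun e he => ?_, mem_limSubdiff_of_mem_closure (hh.continuousOn.continuousAt hU) ?_⟩
  · have hbound : Tendsto (fun k : ℕ => 2 * (1 / ((k : ℝ) + 1)) * ‖e‖) atTop (𝓝 0) := by
      simpa using (hlim.const_mul 2).mul_const ‖e‖
    exact le_of_tendsto_of_tendsto' (hrlim.inner tendsto_const_nhds)
      (hbound.comp hφ.tendsto_atTop) fun k => hrQ (φ k) e he
  · exact mem_closure_of_tendsto ((hqlim.comp hφ.tendsto_atTop).prodMk_nhds (hrlim.const_sub z))
      (Eventually.of_forall fun k => hprox (φ k))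

end FuzzySumRule

section ConvexNormalCone

variable {E : Type*} [NormedAddCommGroup E] [InnerProductSpace ℝ E] {C : Set E} {x ν ν' h : E}

theorem add_mem_convNormal (hν : ν ∈ convNormal C x) (hν' : ν' ∈ convNormal C x) :
    ν + ν' ∈ convNormal C x :=
  ⟨hν.1, fun y hy => by
    rw [inner_add_left]
    exact add_nonpos (hν.2 y hy) (hν'.2 y hy)⟩

theorem smul_mem_convNormal {t : ℝ} (ht : 0 ≤ t) (hν : ν ∈ convNormal C x) :
    t • ν ∈ convNormal C x :=
  ⟨hν.1, fun y hy => by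
    rw [real_inner_smul_left]
    exact mul_nonpos_of_nonneg_of_nonpos ht (hν.2 y hy)⟩

theorem mem_convNormal_add_of_inner_eq_zero (hν : ν ∈ convNormal C x) (hxh : x + h ∈ C)
    (hνh : ⟪ν, h⟫ = 0) : ν ∈ convNormal C (x + h) :=
  ⟨hxh, fun y hy => by
    rw [← sub_sub, inner_sub_right, hνh, sub_zero]
    exact hν.2 y hy⟩

end ConvexNormalCone

section Coderivative

variable {V E : Type*} [NormedAddCommGroup V] [NormedAddCommGroup E]

/-- The graph of a set-valued map, as the subset of the `L²` product used in `coderiv`. -/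
def setGraph (G : V → Set E) : Set (WithLp 2 (V × E)) :=
  {q | psnd q ∈ G (pfst q)}

variable {G : V → Set E} {f : V → E} {U : Set V} {K : NNReal} {ε : ℝ} {p z : V} {ω w : E}

theorem eventually_norm_map_add_sub_le (hU : U ∈ 𝓝 p) (hf : LipschitzOnWith K f U) :
    ∀ᶠ e in 𝓝 0, ‖f (p + e) - f p‖ ≤ K * ‖e‖ := by
  have hshift : Tendsto (fun e => p + e) (𝓝 0) (𝓝 p) := by
    simpa using (continuous_const_add p).tendsto 0
  filter_upwards [hshift.eventually hU] with e he
  simpa [dist_eq_norm] using hf.dist_le_mul _ he _ (mem_of_mem_nhds hU)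

variable [InnerProductSpace ℝ V] [InnerProductSpace ℝ E] {v : WithLp 2 (V × E)}

theorem mem_closure_isProximalNormal_of_mem_coderiv (hω : ω ∈ G p) (hz : z ∈ coderiv G p ω w) :
    (pmk p ω, pmk z (-w)) ∈ closure {q : WithLp 2 (V × E) × WithLp 2 (V × E) |
      IsProximalNormal (setGraph G) q.1 q.2} :=
  mem_closure_isProximalNormal_of_mem_limNormal hω hz

theorem IsProximalNormal.exists_eventually_inner_add_inner_le
    (hv : IsProximalNormal (setGraph G) (pmk p (f p)) v) (hU : U ∈ 𝓝 p)
    (hf : LipschitzOnWith K f U) :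
    ∃ τ : ℝ, ∀ᶠ e in 𝓝[{e | f (p + e) ∈ G (p + e)}] 0,
      ⟪pfst v, e⟫ + ⟪psnd v, f (p + e) - f p⟫ ≤ τ * ‖e‖ ^ 2 := by
  obtain ⟨-, σ, hσ⟩ := hv
  have hshift : Tendsto (fun e => p + e) (𝓝 0) (𝓝 p) := by
    simpa using (continuous_const_add p).tendsto 0
  have hpmk : Continuous fun q : V × E => pmk q.1 q.2 := WithLp.prod_continuous_toLp 2 V E
  have hcurve : Tendsto (fun e => pmk (p + e) (f (p + e))) (𝓝 0) (𝓝 (pmk p (f p))) :=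
    (hpmk.tendsto (p, f p)).comp
      (hshift.prodMk_nhds ((hf.continuousOn.continuousAt hU).tendsto.comp hshift))
  have hgraph : Tendsto (fun e => pmk (p + e) (f (p + e))) (𝓝[{e | f (p + e) ∈ G (p + e)}] 0)
      (𝓝[setGraph G] pmk p (f p)) :=
    tendsto_nhdsWithin_iff.2 ⟨hcurve.mono_left nhdsWithin_le_nhds, eventually_mem_nhdsWithin⟩
  refine ⟨|σ| * (1 + K ^ 2), ?_⟩
  filter_upwards [hgraph.eventually hσ,
    nhdsWithin_le_nhds (eventually_norm_map_add_sub_le hU hf)] with e hle hlip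
  have hdiff : pmk (p + e) (f (p + e)) - pmk p (f p) = pmk e (f (p + e) - f p) :=
    congrArg (fun e' => pmk e' (f (p + e) - f p)) (add_sub_cancel_left p e)
  calc ⟪pfst v, e⟫ + ⟪psnd v, f (p + e) - f p⟫ = ⟪v, pmk e (f (p + e) - f p)⟫ := rfl
    _ ≤ σ * ‖pmk e (f (p + e) - f p)‖ ^ 2 := hdiff ▸ hle
    _ = σ * (‖e‖ ^ 2 + ‖f (p + e) - f p‖ ^ 2) := by rw [WithLp.prod_norm_sq_eq_of_L2]; rfl
    _ ≤ |σ| * (‖e‖ ^ 2 + (K * ‖e‖) ^ 2) := by gcongr; exact le_abs_self σ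
    _ = |σ| * (1 + K ^ 2) * ‖e‖ ^ 2 := by ring

theorem IsProximalNormal.isEpsSubgradientAlong
    (hv : IsProximalNormal (setGraph G) (pmk p (f p)) v) (hU : U ∈ 𝓝 p)
    (hf : LipschitzOnWith K f U) (hε : ‖pfst v - z‖ + K * ‖psnd v + w‖ < ε) :
    IsEpsSubgradientAlong {e | f (p + e) ∈ G (p + e)} (fun q => ⟪w, f q⟫) ε p z := by
  obtain ⟨τ, hτ⟩ := hv.exists_eventually_inner_add_inner_le hU hf
  have hsmall : ∀ᶠ e in 𝓝 (0 : V), ‖pfst v - z‖ + K * ‖psnd v + w‖ + τ * ‖e‖ < ε := by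
    have hcont : Continuous fun e : V => ‖pfst v - z‖ + K * ‖psnd v + w‖ + τ * ‖e‖ := by fun_prop
    exact hcont.continuousAt.eventually_lt_const (by simpa using hε)
  filter_upwards [hτ, nhdsWithin_le_nhds (eventually_norm_map_add_sub_le hU hf),
    nhdsWithin_le_nhds hsmall] with e hprox hlip hsmall
  have hfst : -⟪pfst v - z, e⟫ ≤ ‖pfst v - z‖ * ‖e‖ :=
    (neg_le_abs _).trans (abs_real_inner_le_norm _ _)
  have hsnd : -⟪psnd v + w, f (p + e) - f p⟫ ≤ ‖psnd v + w‖ * (K * ‖e‖) :=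
    ((neg_le_abs _).trans (abs_real_inner_le_norm _ _)).trans (by gcongr)
  have hε' := mul_le_mul_of_nonneg_right hsmall.le (norm_nonneg e)
  rw [inner_sub_left] at hfst
  rw [inner_add_left] at hsnd
  rw [← inner_sub_right]
  linarith

end Coderivative

section Polyhedra

variable {E ι : Type*} [NormedAddCommGroup E] [InnerProductSpace ℝ E]

/-- The convex polyhedron `{x | ⟪a j, x⟫ ≤ c j for all j}`. -/
def polyhedron (a : ι → E) (c : ι → ℝ) : Set E :=
  {x | ∀ j, ⟪a j, x⟫ ≤ c j}

/-- The tangent cone to `polyhedron a c` at `x`, in its description by active constraints. -/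
def polyhedronTangent (a : ι → E) (c : ι → ℝ) (x : E) : Set E :=
  {h | ∀ j, ⟪a j, x⟫ = c j → ⟪a j, h⟫ ≤ 0}

/-- The critical cone of `polyhedron a c` at `x` for a normal `ν`: tangent directions orthogonal
to `ν`. -/
def criticalCone (a : ι → E) (c : ι → ℝ) (x ν : E) : Set E :=
  {h | h ∈ polyhedronTangent a c x ∧ ⟪ν, h⟫ = 0}

variable {a : ι → E} {c : ι → ℝ} {x ν w h : E}

theorem mem_convNormal_polyhedron_of_active (hx : x ∈ polyhedron a c) {j : ι}
    (hj : ⟪a j, x⟫ = c j) : a j ∈ convNormal (polyhedron a c) x :=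
  ⟨hx, fun y hy => by
    rw [inner_sub_right, hj]
    exact sub_nonpos.2 (hy j)⟩

variable [Finite ι]

theorem eventually_active_imp_active (a : ι → E) (c : ι → ℝ) (x : E) :
    ∀ᶠ y in 𝓝 x, ∀ j, ⟪a j, y⟫ = c j → ⟪a j, x⟫ = c j := by
  refine eventually_all.2 fun j => ?_
  by_cases hj : ⟪a j, x⟫ = c j
  · exact Eventually.of_forall fun _ _ => hj
  · have hcont : Continuous fun y => ⟪a j, y⟫ := by fun_prop
    exact (hcont.continuousAt.eventually_ne hj).mono fun y hy h => absurd h hy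

theorem eventually_polyhedronTangent_subset (a : ι → E) (c : ι → ℝ) (x : E) :
    ∀ᶠ y in 𝓝 x, polyhedronTangent a c x ⊆ polyhedronTangent a c y :=
  (eventually_active_imp_active a c x).mono fun _ hy _ hh j hj => hh j (hy j hj)

theorem eventually_add_mem_polyhedron (hx : x ∈ polyhedron a c) :
    ∀ᶠ h in 𝓝 0, h ∈ polyhedronTangent a c x → x + h ∈ polyhedron a c := by
  have hj (j : ι) : ∀ᶠ h in 𝓝 0, h ∈ polyhedronTangent a c x → ⟪a j, x + h⟫ ≤ c j := by
    rcases (hx j).lt_or_eq with hlt | heq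
    · have hcont : Continuous fun h => ⟪a j, x + h⟫ := by fun_prop
      exact (hcont.continuousAt.eventually_lt_const (by simpa using hlt)).mono fun _ hh _ => hh.le
    · refine Eventually.of_forall fun h hh => ?_
      rw [inner_add_right, heq]
      linarith [hh j heq]
  exact (eventually_all.2 hj).mono fun h hh hT j => hh j hT

theorem inner_nonpos_of_mem_convNormal_of_mem_polyhedronTangent
    (hν : ν ∈ convNormal (polyhedron a c) x) (hh : h ∈ polyhedronTangent a c x) : ⟪ν, h⟫ ≤ 0 := by
  obtain ⟨t, hadd, ht⟩ := ((eventually_nhdsGT_smul_mem (eventually_add_mem_polyhedron hν.1) h).and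
    self_mem_nhdsWithin).exists
  have ht0 : 0 < t := ht
  have hth : t • h ∈ polyhedronTangent a c x := fun j hj => by
    rw [real_inner_smul_right]
    exact mul_nonpos_of_nonneg_of_nonpos ht0.le (hh j hj)
  have hνth := hν.2 _ (hadd hth)
  rw [add_sub_cancel_left, real_inner_smul_right] at hνth
  exact nonpos_of_mul_nonpos_right hνth ht0

theorem isProximalNormal_graph_convNormal_polyhedron {κ : E}
    (hν : ν ∈ convNormal (polyhedron a c) x) (hκ : κ ∈ criticalCone a c x ν) :
    IsProximalNormal (setGraph (convNormal (polyhedron a c))) (pmk x ν) (pmk 0 κ) := by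
  refine ⟨hν, 0, ?_⟩
  have hfst : Tendsto pfst (𝓝 (pmk x ν)) (𝓝 x) := (WithLp.continuous_fst 2 E E).tendsto (pmk x ν)
  filter_upwards [nhdsWithin_le_nhds (hfst.eventually (eventually_polyhedronTangent_subset a c x)),
    self_mem_nhdsWithin] with q hsub hq
  have hinner : ⟪psnd q, κ⟫ ≤ 0 :=
    inner_nonpos_of_mem_convNormal_of_mem_polyhedronTangent hq (hsub hκ.1)
  calc ⟪pmk 0 κ, q - pmk x ν⟫ = ⟪(0 : E), pfst q - x⟫ + ⟪κ, psnd q - ν⟫ := rfl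
    _ = ⟪psnd q, κ⟫ - ⟪ν, κ⟫ := by
      rw [inner_zero_left, zero_add, inner_sub_right, real_inner_comm, real_inner_comm ν]
    _ ≤ 0 * ‖q - pmk x ν‖ ^ 2 := by linarith [hκ.2]

end Polyhedra

section MultiplierPolar

variable {E ι : Type*} [NormedAddCommGroup E] [InnerProductSpace ℝ E] [CompleteSpace E]
  {a : ι → E} {c : ι → ℝ} {x ν w h : E}

/-- The polar of the cone of combinations `∑ γ j • a j` with the multiplier signs of the
coderivative: `j` active at `x` and `0 ≤ ⟪a j, w⟫`, with `γ j` free if `⟪a j, w⟫ = 0` and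
nonnegative otherwise. -/
def multiplierPolar (a : ι → E) (c : ι → ℝ) (x w : E) : ProperCone ℝ E :=
  .innerDual ({v | ∃ j, ⟪a j, x⟫ = c j ∧ 0 ≤ ⟪a j, w⟫ ∧ v = -a j} ∪
    {v | ∃ j, ⟪a j, x⟫ = c j ∧ ⟪a j, w⟫ = 0 ∧ v = a j})

theorem mem_multiplierPolar : h ∈ multiplierPolar a c x w ↔ ∀ j, ⟪a j, x⟫ = c j →
    0 ≤ ⟪a j, w⟫ → ⟪a j, h⟫ ≤ 0 ∧ (⟪a j, w⟫ = 0 → ⟪a j, h⟫ = 0) := by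
  rw [multiplierPolar, ProperCone.mem_innerDual]
  constructor
  · intro hh j hj hjw
    have hle : ⟪a j, h⟫ ≤ 0 := by simpa using hh (.inl ⟨j, hj, hjw, rfl⟩)
    exact ⟨hle, fun h0 => hle.antisymm (hh (.inr ⟨j, hj, h0, rfl⟩))⟩
  · rintro hh _ (⟨j, hj, hjw, rfl⟩ | ⟨j, hj, hjw, rfl⟩)
    · simpa using (hh j hj hjw).1
    · exact ((hh j hj hjw.ge).2 hjw).ge

variable [Finite ι]

theorem eventually_multiplierPolar_le (a : ι → E) (c : ι → ℝ) (x w : E) :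
    ∀ᶠ q : E × E in 𝓝 (x, w), multiplierPolar a c x w ≤ multiplierPolar a c q.1 q.2 := by
  have hcont (j : ι) : Continuous fun v => ⟪a j, v⟫ := by fun_prop
  have hneg : ∀ᶠ v in 𝓝 w, ∀ j, ⟪a j, w⟫ < 0 → ⟪a j, v⟫ < 0 :=
    eventually_all.2 fun j => eventually_imp_distrib_left.2 fun hj =>
      (hcont j).continuousAt.eventually_lt_const hj
  have hpos : ∀ᶠ v in 𝓝 w, ∀ j, 0 < ⟪a j, w⟫ → 0 < ⟪a j, v⟫ :=
    eventually_all.2 fun j => eventually_imp_distrib_left.2 fun hj =>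
      (hcont j).continuousAt.eventually_const_lt hj
  rw [nhds_prod_eq]
  filter_upwards [(eventually_active_imp_active a c x).prod_mk (hneg.and hpos)]
    with q ⟨hactive, hneg, hpos⟩ h hh
  refine mem_multiplierPolar.2 fun j hj hjq => ?_
  have hjw : 0 ≤ ⟪a j, w⟫ := not_lt.1 fun hlt => hjq.not_gt (hneg j hlt)
  obtain ⟨hle, heq⟩ := mem_multiplierPolar.1 hh j (hactive j hj) hjw
  exact ⟨hle, fun h0 => heq (hjw.eq_of_not_lt fun hlt => (hpos j hlt).ne' h0).symm⟩

/- `-h - M • w` is tangent for large `M`, and `⟪ν, w⟫ = 0`, so `⟪ν, -h⟫ ≤ 0` as well. -/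
theorem multiplierPolar_subset_criticalCone (hν : ν ∈ convNormal (polyhedron a c) x)
    (hw : -w ∈ criticalCone a c x ν) :
    (multiplierPolar a c x w : Set E) ⊆ criticalCone a c x ν := by
  intro h hh
  have hnonneg (j : ι) (hj : ⟪a j, x⟫ = c j) : 0 ≤ ⟪a j, w⟫ := by simpa using hw.1 j hj
  have hνw : ⟪ν, w⟫ = 0 := by simpa using hw.2
  have hh' (j : ι) (hj : ⟪a j, x⟫ = c j) := mem_multiplierPolar.1 hh j hj (hnonneg j hj)
  have htangent : h ∈ polyhedronTangent a c x := fun j hj => (hh' j hj).1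
  have hlarge (j : ι) : ∀ᶠ M : ℝ in atTop, ⟪a j, x⟫ = c j → -⟪a j, h⟫ ≤ M * ⟪a j, w⟫ := by
    refine eventually_imp_distrib_left.2 fun hj => ?_
    rcases (hnonneg j hj).eq_or_lt with h0 | hpos
    · simp [(hh' j hj).2 h0.symm, ← h0]
    · exact (tendsto_id.atTop_mul_const hpos).eventually_ge_atTop _
  obtain ⟨M, hM⟩ := (eventually_all.2 hlarge).exists
  have hneg : -h - M • w ∈ polyhedronTangent a c x := fun j hj => by
    rw [inner_sub_right, inner_neg_right, real_inner_smul_right]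
    linarith [hM j hj]
  have hνneg := inner_nonpos_of_mem_convNormal_of_mem_polyhedronTangent hν hneg
  rw [inner_sub_right, inner_neg_right, real_inner_smul_right, hνw] at hνneg
  exact ⟨htangent, le_antisymm
    (inner_nonpos_of_mem_convNormal_of_mem_polyhedronTangent hν htangent) (by linarith)⟩

end MultiplierPolar

section SweepingMap

variable {V E ι : Type*} [NormedAddCommGroup V] [InnerProductSpace ℝ V] [NormedAddCommGroup E]
  [InnerProductSpace ℝ E]

/-- The sweeping map `p ↦ N(π p; C) + g p` of the polyhedron `C = polyhedron a c`; the state is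
selected from the pair `p = (x, u)` by the linear map `π`. -/
def sweepingMap (a : ι → E) (c : ι → ℝ) (π : V →L[ℝ] E) (g : V → E) (p : V) : Set E :=
  {ω | ∃ ν ∈ convNormal (polyhedron a c) (π p), ω = ν + g p}

variable {a : ι → E} {c : ι → ℝ} {π : V →L[ℝ] E} {g : V → E} {U : Set V} {K : NNReal} {ε : ℝ}
  {p z : V} {ω w : E} {y v : WithLp 2 (V × E)}

theorem mem_sweepingMap :
    ω ∈ sweepingMap a c π g p ↔ ω - g p ∈ convNormal (polyhedron a c) (π p) := by
  constructor
  · rintro ⟨ν, hν, rfl⟩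
    rwa [add_sub_cancel_right]
  · exact fun h => ⟨_, h, (sub_add_cancel ω (g p)).symm⟩

theorem psnd_mem_criticalCone_of_isProximalNormal
    (hv : IsProximalNormal (setGraph (sweepingMap a c π g)) y v) :
    psnd v ∈ criticalCone a c (π (pfst y)) (psnd y - g (pfst y)) := by
  set ν := psnd y - g (pfst y)
  have hν : ν ∈ convNormal (polyhedron a c) (π (pfst y)) := mem_sweepingMap.1 hv.1
  have hinner {μ : E}
      (hμ : ∀ᶠ t in 𝓝[>] (0 : ℝ), ν + t • μ ∈ convNormal (polyhedron a c) (π (pfst y))) :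
      ⟪μ, psnd v⟫ ≤ 0 := by
    have hray : ∀ᶠ t in 𝓝[>] (0 : ℝ), y + t • pmk 0 μ ∈ setGraph (sweepingMap a c π g) :=
      hμ.mono fun t ht => by
        have hfst : pfst (y + t • pmk 0 μ) = pfst y :=
          (congrArg (pfst y + ·) (smul_zero t)).trans (add_zero _)
        have hsnd : psnd (y + t • pmk (0 : V) μ) = psnd y + t • μ := rfl
        refine mem_sweepingMap.2 ?_
        rwa [hfst, hsnd, add_sub_right_comm]
    calc ⟪μ, psnd v⟫ = ⟪pfst v, (0 : V)⟫ + ⟪psnd v, μ⟫ := by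
          rw [inner_zero_right, zero_add, real_inner_comm]
      _ = ⟪v, pmk 0 μ⟫ := rfl
      _ ≤ 0 := hv.inner_nonpos hray
  have hadd {μ : E} (hμ : μ ∈ convNormal (polyhedron a c) (π (pfst y))) : ⟪μ, psnd v⟫ ≤ 0 :=
    hinner (eventually_mem_nhdsWithin.mono fun t ht =>
      add_mem_convNormal hν (smul_mem_convNormal (le_of_lt ht) hμ))
  refine ⟨fun j hj => hadd (mem_convNormal_polyhedron_of_active hν.1 hj),
    (hadd hν).antisymm ?_⟩
  rw [← neg_nonpos, ← inner_neg_left]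
  refine hinner ?_
  filter_upwards [Ioc_mem_nhdsGT one_pos] with t ht
  rw [smul_neg, ← sub_eq_add_neg, ← one_smul ℝ ν, smul_smul, mul_one, ← sub_smul]
  exact smul_mem_convNormal (sub_nonneg.2 ht.2) hν

variable [Finite ι]

theorem zero_mem_coderiv_convNormal_of_mem_coderiv_sweepingMap (hg : ContinuousAt g p)
    (hω : ω ∈ sweepingMap a c π g p) (hz : z ∈ coderiv (sweepingMap a c π g) p ω w) :
    0 ∈ coderiv (convNormal (polyhedron a c)) (π p) (ω - g p) w := by
  let T : WithLp 2 (V × E) × WithLp 2 (V × E) → WithLp 2 (E × E) × WithLp 2 (E × E) :=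
    fun q => (pmk (π (pfst q.1)) (psnd q.1 - g (pfst q.1)), pmk 0 (psnd q.2))
  have hpmk : Continuous fun q : E × E => pmk q.1 q.2 := WithLp.prod_continuous_toLp 2 E E
  have hfst : Continuous fun q : WithLp 2 (V × E) × WithLp 2 (V × E) => pfst q.1 :=
    (WithLp.continuous_fst 2 V E).comp continuous_fst
  have hsnd : Continuous (psnd : WithLp 2 (V × E) → E) := WithLp.continuous_snd 2 V E
  have hT : ContinuousAt T (pmk p ω, pmk z (-w)) := by
    refine (hpmk.continuousAt.comp ((π.continuous.comp hfst).continuousAt.prodMk ?_)).prodMk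
      (hpmk.comp (continuous_const.prodMk (hsnd.comp continuous_snd))).continuousAt
    exact (hsnd.comp continuous_fst).continuousAt.sub
      (ContinuousAt.comp (f := fun q : WithLp 2 (V × E) × WithLp 2 (V × E) => pfst q.1) hg
        hfst.continuousAt)
  refine mem_limNormal_of_mem_closure (closure_mono ?_
    (mem_closure_image (f := T) hT (mem_closure_isProximalNormal_of_mem_coderiv hω hz)))
  rintro _ ⟨q, hq, rfl⟩
  exact isProximalNormal_graph_convNormal_polyhedron (mem_sweepingMap.1 hq.1)
    (psnd_mem_criticalCone_of_isProximalNormal hq)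

variable [CompleteSpace E]

theorem isEpsSubgradientAlong_of_isProximalNormal_sweepingMap
    (hv : IsProximalNormal (setGraph (sweepingMap a c π g)) y v) (hU : U ∈ 𝓝 (pfst y))
    (hg : LipschitzOnWith K g U) (hε : ‖pfst v - z‖ + K * ‖psnd v + w‖ < ε) :
    IsEpsSubgradientAlong ((multiplierPolar a c (π (pfst y)) (-psnd v)).comap π : Set V)
      (fun q => ⟪w, g q⟫) ε (pfst y) z := by
  set ν := psnd y - g (pfst y) with hν_def
  have hν : ν ∈ convNormal (polyhedron a c) (π (pfst y)) := mem_sweepingMap.1 hv.1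
  have hy : y = pmk (pfst y) (ν + g (pfst y)) := by rw [hν_def, sub_add_cancel]; rfl
  have hνg : LipschitzOnWith K (fun q => ν + g q) U := fun q hq q' hq' => by
    simpa using hg hq hq'
  have heps := (hy ▸ hv).isEpsSubgradientAlong hU hνg hε
  simp only [IsEpsSubgradientAlong, inner_add_right, add_sub_add_left_eq_sub] at heps
  refine IsEpsSubgradientAlong.mono heps ?_
  have hcritical := multiplierPolar_subset_criticalCone hν (w := -psnd v)
    (by simpa only [neg_neg] using psnd_mem_criticalCone_of_isProximalNormal hv)
  have hπ : Tendsto π (𝓝 0) (𝓝 0) := by simpa using π.continuous.tendsto 0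
  filter_upwards [nhdsWithin_le_nhds (hπ.eventually (eventually_add_mem_polyhedron hν.1)),
    self_mem_nhdsWithin] with e hadd he
  obtain ⟨htangent, hortho⟩ := hcritical (ProperCone.mem_comap.1 he)
  refine ⟨ν, ?_, rfl⟩
  rw [map_add]
  exact mem_convNormal_add_of_inner_eq_zero hν (hadd htangent) hortho

theorem frequently_isEpsSubgradientAlong_of_mem_coderiv_sweepingMap (hU : U ∈ 𝓝 p)
    (hg : LipschitzOnWith K g U) (hω : ω ∈ sweepingMap a c π g p)
    (hz : z ∈ coderiv (sweepingMap a c π g) p ω w) (hε : 0 < ε) :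
    ∃ᶠ q in 𝓝 p, IsEpsSubgradientAlong ((multiplierPolar a c (π p) w).comap π : Set V)
      (fun q => ⟪w, g q⟫) ε q z := by
  have hfst : Continuous (pfst : WithLp 2 (V × E) → V) := WithLp.continuous_fst 2 V E
  have hsnd : Continuous (psnd : WithLp 2 (V × E) → E) := WithLp.continuous_snd 2 V E
  have hbase : Tendsto (fun q : WithLp 2 (V × E) × WithLp 2 (V × E) => pfst q.1)
      (𝓝 (pmk p ω, pmk z (-w))) (𝓝 p) := (hfst.comp continuous_fst).tendsto _
  have hcone : Tendsto (fun q : WithLp 2 (V × E) × WithLp 2 (V × E) => (π (pfst q.1), -psnd q.2))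
      (𝓝 (pmk p ω, pmk z (-w))) (𝓝 (π p, w)) := by
    have hcont : Continuous fun q : WithLp 2 (V × E) × WithLp 2 (V × E) =>
        (π (pfst q.1), -psnd q.2) :=
      ((π.continuous.comp hfst).comp continuous_fst).prodMk (hsnd.comp continuous_snd).neg
    exact hcont.tendsto' _ _ (congrArg (Prod.mk (π p)) (neg_neg w))
  have hclose : ∀ᶠ q in 𝓝 (pmk p ω, pmk z (-w)), ‖pfst q.2 - z‖ + K * ‖psnd q.2 + w‖ < ε := by
    have hcont : Continuous fun q : WithLp 2 (V × E) × WithLp 2 (V × E) =>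
        ‖pfst q.2 - z‖ + K * ‖psnd q.2 + w‖ :=
      ((hfst.comp continuous_snd).sub continuous_const).norm.add
        (continuous_const.mul ((hsnd.comp continuous_snd).add continuous_const).norm)
    refine hcont.continuousAt.eventually_lt_const ?_
    have hself : ‖z - z‖ + K * ‖-w + w‖ < ε := by simpa using hε
    exact hself
  refine hbase.frequently (((mem_closure_iff_frequently.1
    (mem_closure_isProximalNormal_of_mem_coderiv hω hz)).and_eventually
    ((hbase.eventually (eventually_mem_nhds_iff.2 hU)).and
      ((hcone.eventually (eventually_multiplierPolar_le a c (π p) w)).and hclose))).mono ?_)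
  rintro q ⟨hq, hUq, hle, hεq⟩
  exact (isEpsSubgradientAlong_of_isProximalNormal_sweepingMap hq hUq hg hεq).mono
    (mem_of_superset self_mem_nhdsWithin fun e he => hle he)

end SweepingMap

section Multipliers

variable {V E ι : Type*} [NormedAddCommGroup V] [InnerProductSpace ℝ V] [CompleteSpace V]
  [NormedAddCommGroup E] [InnerProductSpace ℝ E] [CompleteSpace E] [Fintype ι]
  {a : ι → E} {c : ι → ℝ} {π : V →L[ℝ] E} {r : V} {x w : E}

theorem exists_eq_adjoint_sum_smul_of_forall_mem_comap_multiplierPolar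
    (hr : ∀ e ∈ (multiplierPolar a c x w).comap π, ⟪r, e⟫ ≤ 0) :
    ∃ γ : ι → ℝ, (∀ j, ⟪a j, x⟫ = c j ∧ 0 < ⟪a j, w⟫ → 0 ≤ γ j) ∧
      (∀ j, ¬(⟪a j, x⟫ = c j ∧ 0 ≤ ⟪a j, w⟫) → γ j = 0) ∧
      r = ContinuousLinearMap.adjoint π (∑ j, γ j • a j) := by
  classical
  let S : Finset ι := {j | ⟪a j, x⟫ = c j ∧ 0 ≤ ⟪a j, w⟫}
  have hS (j : ι) : j ∈ S ↔ ⟪a j, x⟫ = c j ∧ 0 ≤ ⟪a j, w⟫ := by simp [S]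
  obtain ⟨γ, hγ, hφ⟩ := farkas {j | ⟪a j, w⟫ = 0} S (fun j => (innerₗ E (a j)).comp π.toLinearMap)
    (innerₗ V r) fun e he => hr e <| ProperCone.mem_comap.2 <| mem_multiplierPolar.2
      fun j hj hjw => he j ((hS j).2 ⟨hj, hjw⟩)
  refine ⟨fun j => if j ∈ S then γ j else 0, fun j ⟨hj, hjw⟩ => ?_, fun j hj => ?_, ?_⟩
  · have hjS := (hS j).2 ⟨hj, hjw.le⟩
    simpa only [hjS, if_true] using hγ j hjS hjw.ne'
  · exact if_neg fun hjS => hj ((hS j).1 hjS)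
  · refine ext_inner_right ℝ fun e => ?_
    have hφe : ⟪r, e⟫ = ∑ j ∈ S, γ j * ⟪a j, π e⟫ := by
      simpa using LinearMap.congr_fun hφ e
    rw [hφe, ContinuousLinearMap.adjoint_inner_left, sum_inner]
    simp [ite_smul, real_inner_smul_left, apply_ite (fun v => ⟪v, π e⟫), Finset.sum_ite_mem]

end Multipliers

theorem adjoint_fstL {V E : Type*} [NormedAddCommGroup V] [InnerProductSpace ℝ V]
    [CompleteSpace V] [NormedAddCommGroup E] [InnerProductSpace ℝ E] [CompleteSpace E] (v : V) :
    ContinuousLinearMap.adjoint (WithLp.fstL 2 ℝ V E) v = pmk v 0 :=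
  ext_inner_right ℝ fun q => by
    calc ⟪ContinuousLinearMap.adjoint (WithLp.fstL 2 ℝ V E) v, q⟫ = ⟪v, pfst q⟫ :=
          ContinuousLinearMap.adjoint_inner_left _ _ _
      _ = ⟪v, pfst q⟫ + ⟪(0 : E), psnd q⟫ := by rw [inner_zero_left, add_zero]
      _ = ⟪pmk v 0, q⟫ := rfl

theorem statement0_general {V E ι : Type*} [NormedAddCommGroup V] [InnerProductSpace ℝ V]
    [FiniteDimensional ℝ V] [CompleteSpace V] [NormedAddCommGroup E] [InnerProductSpace ℝ E]
    [CompleteSpace E] [Fintype ι] {a : ι → E} {c : ι → ℝ} {π : V →L[ℝ] E} {g : V → E} {K : NNReal}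
    {U : Set V} {p z : V} {ω w : E} (hU : U ∈ 𝓝 p) (hg : LipschitzOnWith K g U)
    (hω : ω ∈ sweepingMap a c π g p) (hz : z ∈ coderiv (sweepingMap a c π g) p ω w) :
    (coderiv (convNormal (polyhedron a c)) (π p) (ω - g p) w).Nonempty ∧
    ∃ γ : ι → ℝ, (∀ j, ⟪a j, π p⟫ = c j ∧ 0 < ⟪a j, w⟫ → 0 ≤ γ j) ∧
      (∀ j, ¬(⟪a j, π p⟫ = c j ∧ 0 ≤ ⟪a j, w⟫) → γ j = 0) ∧
      z - ContinuousLinearMap.adjoint π (∑ j, γ j • a j) ∈ limSubdiff (fun q => ⟪w, g q⟫) p := by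
  have hwg : LipschitzOnWith (‖w‖₊ * K) (fun q => ⟪w, g q⟫) U :=
    .of_dist_le_mul fun q hq q' hq' => by
      rw [Real.dist_eq, ← inner_sub_right, NNReal.coe_mul, mul_assoc]
      refine (abs_real_inner_le_norm _ _).trans ?_
      rw [← dist_eq_norm]
      exact mul_le_mul_of_nonneg_left (hg.dist_le_mul q hq q' hq') (norm_nonneg w)
  obtain ⟨r, hr, hzr⟩ := exists_sub_mem_limSubdiff hU hwg fun ε hε =>
    frequently_isEpsSubgradientAlong_of_mem_coderiv_sweepingMap hU hg hω hz hε
  obtain ⟨γ, hpos, hoff, rfl⟩ :=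
    exists_eq_adjoint_sum_smul_of_forall_mem_comap_multiplierPolar hr
  exact ⟨⟨0, zero_mem_coderiv_convNormal_of_mem_coderiv_sweepingMap
    (hg.continuousOn.continuousAt hU) hω hz⟩, γ, hpos, hoff, hzr⟩

/-- coderivative upper estimate for the nonsmooth sweeping mapping
`F(x,u) = N(x;C) + g(x,u)` under PLICQ. -/
theorem statement0 (n d s : ℕ)
    (xs : Fin s → Euc n) (c : Fin s → ℝ)
    (g : WithLp 2 (Euc n × Euc d) → Euc n)
    (hg : LocallyLipschitz g)
    (C : Set (Euc n)) (hC : C = {x | ∀ j, ⟪xs j, x⟫ ≤ c j})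
    (F : WithLp 2 (Euc n × Euc d) → Set (Euc n))
    (hF : ∀ p, F p = {ω | ∃ v ∈ convNormal C (pfst p), ω = v + g p})
    (x : Euc n) (hx : x ∈ C)
    (hPLICQ : ∀ α : Fin s → ℝ, (∀ j, 0 ≤ α j) →
      (∀ j, ⟪xs j, x⟫ ≠ c j → α j = 0) → (∑ j, α j • xs j) = 0 → ∀ j, α j = 0)
    (u : Euc d) (ω : Euc n)
    (hω : ∃ v ∈ convNormal C x, ω = g (pmk x u) + v)
    (w : Euc n) (z : WithLp 2 (Euc n × Euc d))
    (hz : z ∈ coderiv F (pmk x u) ω w) :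
    (coderiv (fun y => convNormal C y) x (ω - g (pmk x u)) w).Nonempty ∧
    ∃ γ : Fin s → ℝ,
      (∀ j, (⟪xs j, x⟫ = c j ∧ 0 < ⟪xs j, w⟫) → 0 ≤ γ j) ∧
      (∀ j, ¬(⟪xs j, x⟫ = c j ∧ 0 ≤ ⟪xs j, w⟫) → γ j = 0) ∧
      z - pmk (∑ j, γ j • xs j) (0 : Euc d) ∈
        limSubdiff (fun p => ⟪w, g p⟫) (pmk x u) := by
  have hF' : F = sweepingMap xs c (WithLp.fstL 2 ℝ (Euc n) (Euc d)) g := by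
    funext p
    rw [hF, hC]
    rfl
  subst hF' hC
  obtain ⟨K, U, hU, hgU⟩ := hg (pmk x u)
  obtain ⟨ν, hν, hων⟩ := hω
  have hω' : ω ∈ sweepingMap xs c (WithLp.fstL 2 ℝ (Euc n) (Euc d)) g (pmk x u) :=
    ⟨ν, hν, hων.trans (add_comm _ _)⟩
  obtain ⟨hne, γ, hpos, hoff, hsub⟩ := statement0_general hU hgU hω' hz
  rw [adjoint_fstL] at hsub
  exact ⟨hne, γ, hpos, hoff, hsub⟩
end
end

section
/- Let C ⊆ ℝⁿ be the convex polyhedron determined by vectors x*_1,…,x*_s ∈ ℝⁿ and scalars c_1,…,c_s, let x ∈ C be a point at which PLICQ holds, let u ∈ ℝ^d, let g : ℝⁿ×ℝ^d → ℝⁿ be continuously differentiable on a neighborhood of (x,u), let F(x,u) := N(x;C) + g(x,u), and let ω ∈ g(x,u) + N(x;C). Then for every w ∈ ℝⁿ, every z ∈ D*F((x,u),ω)(w) has the form z = (∇ₓg(x,u)ᵀ w + Σ_{j∈I₀(w)∪I_>(w)} γ_j x*_j, ∇ᵤg(x,u)ᵀ w) for some real numbers γ_j with γ_j ≥ 0 for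 j ∈ I_>(w), where ∇ₓg(x,u)ᵀ and ∇ᵤg(x,u)ᵀ denote the adjoints (transposes) of the partial Jacobians of g at (x,u), and I₀(w), I_>(w) are taken relative to the point x. -/
open Filter Topology Set MeasureTheory
open scoped RealInnerProductSpace

noncomputable section

/-!
A vector realizing a distance to a set is normal to its contingent cone at the projection, so every
limiting normal is a limit of regular normals. Regular normals obey an exact sum rule for `G + g`
with `g` of class `C¹`, because the shear `(p, v) ↦ (p, v + g p)` carries the graph of `G` onto the
graph of `G + g`; this removes `g`. For the normal cone map of a polyhedron, moving along line
segments in the graph shows that a regular normal is a pair `((b, 0), h)` with `h` in a critical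
cone `K` and `b` in the polar of `K`. A polyhedron has only finitely many critical cones, and they
are closed, so the description survives in the limit, and Farkas' lemma writes `b` as the required
combination of the active constraints.
-/

section Farkas

variable {K M N ι : Type*} [Field K] [AddCommGroup M] [Module K M] [AddCommGroup N] [Module K N]

/-- The map `a ↦ a - f a • m`. When `f m = 1` it is the projection onto the kernel of `f` along
`m`, which eliminates `m` in the inductive proof of Farkas' lemma. -/
def projAlong (f : M →ₗ[K] K) (m : M) : M →ₗ[K] M :=
  LinearMap.id - f.smulRight m

theorem projAlong_apply (f : M →ₗ[K] K) (m a : M) : projAlong f m a = a - f a • m := rfl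

variable [LinearOrder K] [IsStrictOrderedRing K]

theorem mem_hull_insert_of_projAlong_mem {f : M →ₗ[K] K} {m b : M} {S : Set M}
    (hS : ∀ a ∈ S, f a ≤ 0) (hb : 0 ≤ f b)
    (h : projAlong f m b ∈ PointedCone.hull K (projAlong f m '' S)) :
    b ∈ PointedCone.hull K (insert m S) := by
  obtain ⟨z, hz, hzb⟩ : ∃ z ∈ PointedCone.hull K S, projAlong f m z = projAlong f m b := by
    rwa [PointedCone.hull, ← LinearMap.coe_restrictScalars {r : K // 0 ≤ r},
      ← Submodule.map_span] at h
  have hfz : f z ≤ 0 := by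
    have hle : PointedCone.hull K S ≤ (PointedCone.positive K K).comap (-f) :=
      Submodule.span_le.2 fun a ha => by simpa using hS a ha
    simpa using hle hz
  refine Submodule.mem_span_insert.2 ⟨⟨f b - f z, by linarith⟩, z, hz, ?_⟩
  rw [projAlong_apply, projAlong_apply] at hzb
  rw [Nonneg.mk_smul]
  linear_combination (norm := module) -hzb

variable {p : M →ₗ[K] N →ₗ[K] K}

theorem exists_normalized_separation {m b : M} {S : Set M}
    (hb : b ∈ PointedCone.dual p.flip (PointedCone.dual p (insert m S) : Set N))
    (hbS : b ∉ PointedCone.dual p.flip (PointedCone.dual p S : Set N)) :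
    ∃ y, p m y = 1 ∧ (∀ a ∈ S, p a y ≤ 0) ∧ 0 ≤ p b y := by
  obtain ⟨y, hy, hby⟩ : ∃ y ∈ PointedCone.dual p S, p b y < 0 := by
    simpa only [PointedCone.mem_dual (p := p.flip), SetLike.mem_coe, LinearMap.flip_apply,
      not_forall, not_le, exists_prop] using hbS
  have hmy : p m y < 0 := by
    by_contra! hle
    rw [PointedCone.dual_insert] at hb
    exact hby.not_ge (hb ⟨by simpa using hle, hy⟩)
  have hinv : (p m y)⁻¹ ≤ 0 := inv_nonpos.2 hmy.le
  refine ⟨(p m y)⁻¹ • y, by simp [hmy.ne], fun a ha => ?_, ?_⟩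
  · simpa using mul_nonpos_of_nonpos_of_nonneg hinv (hy ha)
  · simpa using mul_nonneg_of_nonpos_of_nonpos hinv hby.le

theorem mem_hull_image_of_mem_dual_dual (hp : Function.Injective p) {T : Finset ι}
    {x : ι → M} {b : M}
    (hb : b ∈ PointedCone.dual p.flip (PointedCone.dual p (x '' T) : Set N)) :
    b ∈ PointedCone.hull K (x '' T) := by
  classical
  induction T using Finset.induction_on generalizing x b with
  | empty =>
    have hpb : p b = 0 := by
      ext y
      have hpos : 0 ≤ p b y := hb (by simp)
      have hneg : 0 ≤ p b (-y) := hb (by simp)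
      rw [map_neg] at hneg
      exact le_antisymm (neg_nonneg.1 hneg) hpos
    simp [(map_eq_zero_iff p hp).1 hpb]
  | insert m T _ ih =>
    rw [Finset.coe_insert, image_insert_eq] at hb ⊢
    by_cases hbT : b ∈ PointedCone.dual p.flip (PointedCone.dual p (x '' T) : Set N)
    · exact Submodule.span_mono (subset_insert _ _) (ih hbT)
    obtain ⟨y₁, hmy₁, hTy₁, hby₁⟩ := exists_normalized_separation hb hbT
    rw [PointedCone.dual_insert] at hb
    have hproj (a : M) (y : N) :
        p (projAlong (p.flip y₁) (x m) a) y = p a (y - p (x m) y • y₁) := by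
      simp [projAlong_apply, mul_comm]
    refine mem_hull_insert_of_projAlong_mem (f := p.flip y₁) hTy₁ hby₁ ?_
    rw [← image_comp]
    refine ih fun y hy => ?_
    rw [LinearMap.flip_apply, hproj]
    refine hb ⟨by simp [hmy₁], forall_mem_image.2 fun j hj => ?_⟩
    rw [← hproj]
    exact hy (mem_image_of_mem _ hj)

/-- Farkas' lemma. It is proved by elimination because Hahn–Banach separation only identifies the
bidual with the closure of the hull. -/
theorem dual_flip_dual_of_finite (hp : Function.Injective p) {S : Set M} (hS : S.Finite) :
    PointedCone.dual p.flip (PointedCone.dual p S : Set N) = PointedCone.hull K S := by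
  refine le_antisymm (fun b hb => ?_) (Submodule.span_le.2 PointedCone.subset_dual_dual)
  simpa using mem_hull_image_of_mem_dual_dual hp (T := hS.toFinset) (x := id) (by simpa using hb)

end Farkas

section RegularNormals

theorem tendsto_of_norm_sub_eq_infDist {E : Type*} [SeminormedAddCommGroup E]
    {Ω : Set E} {z : E} {zk yk : ℕ → E} (hz : z ∈ Ω)
    (hzk : Tendsto zk atTop (𝓝 z)) (hyk : ∀ k, ‖zk k - yk k‖ = Metric.infDist (zk k) Ω) :
    Tendsto yk atTop (𝓝 z) := by
  have hsub : Tendsto (fun k => zk k - yk k) atTop (𝓝 0) := by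
    rw [tendsto_zero_iff_norm_tendsto_zero]
    refine squeeze_zero (fun _ => norm_nonneg _) (fun k => ?_)
      (tendsto_iff_norm_sub_tendsto_zero.1 hzk)
    rw [hyk k, ← dist_eq_norm]
    exact Metric.infDist_le_dist_of_mem hz
  simpa using hzk.sub hsub

theorem mapsTo_posTangentConeAt_of_hasFDerivAt {E F : Type*} [NormedAddCommGroup E]
    [NormedSpace ℝ E] [NormedAddCommGroup F] [NormedSpace ℝ F] {f : E → F} {f' : E →L[ℝ] F}
    {y : E} {Ω : Set E} {Ω' : Set F} (hf : HasFDerivAt f f' y) (hΩ : MapsTo f Ω Ω') :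
    MapsTo f' (posTangentConeAt Ω y) (posTangentConeAt Ω' (f y)) := by
  intro e he
  obtain ⟨ι, l, hl, c, d, hd₀, hd, hcd⟩ := exists_fun_of_mem_tangentConeAt he
  refine mem_tangentConeAt_of_seq l c (fun i => f (y + d i) - f y) ?_ ?_ ?_
  · rw [tendsto_sub_nhds_zero_iff]
    exact hf.continuousAt.tendsto.comp (by simpa using tendsto_const_nhds.add hd₀)
  · exact hd.mono fun i hi => by simpa using hΩ hi
  · exact hf.hasFDerivWithinAt.lim hd₀ hd hcd

variable {E F : Type*} [NormedAddCommGroup E] [InnerProductSpace ℝ E]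
  [NormedAddCommGroup F] [InnerProductSpace ℝ F]

/-- The regular (Fréchet) normal cone to `Ω` at `y`, encoded as the polar of the contingent cone,
which agrees with the `ε`-definition in finite dimensions. -/
def regNormal (Ω : Set E) (y : E) : Set E :=
  {v | ∀ e ∈ posTangentConeAt Ω y, ⟪v, e⟫ ≤ 0}

/-- The graph of the regular normal cone map `y ↦ regNormal Ω y` over `Ω`. Its closure consists of
the limits of regular normals. -/
def regNormalBundle (Ω : Set E) : Set (E × E) :=
  {q | q.1 ∈ Ω ∧ q.2 ∈ regNormal Ω q.1}

theorem mem_regNormal_of_hasFDerivAt {f : E → F} {f' : E →L[ℝ] F} {y v : E} {v' : F}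
    {Ω : Set E} {Ω' : Set F} (hf : HasFDerivAt f f' y) (hΩ : MapsTo f Ω Ω')
    (hv' : v' ∈ regNormal Ω' (f y)) (hv : ∀ e, ⟪v, e⟫ = ⟪v', f' e⟫) : v ∈ regNormal Ω y :=
  fun e he => hv e ▸ hv' _ (mapsTo_posTangentConeAt_of_hasFDerivAt hf hΩ he)

theorem inner_nonpos_of_mem_regNormal {Ω : Set E} {y v e : E} (hv : v ∈ regNormal Ω y)
    (he : ∀ᶠ τ in 𝓝[>] (0 : ℝ), y + τ • e ∈ Ω) : ⟪v, e⟫ ≤ 0 :=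
  hv e (mem_posTangentConeAt_of_frequently_mem he.frequently)

theorem smul_sub_mem_regNormal {Ω : Set E} {y z : E} {t : ℝ} (ht : 0 ≤ t)
    (hyz : ‖z - y‖ = Metric.infDist z Ω) : t • (z - y) ∈ regNormal Ω y := by
  intro e he
  have hmin : IsLocalMinOn (fun q => ‖z - q‖ ^ 2) Ω y :=
    eventually_mem_nhdsWithin.mono fun q hq => by
      have : ‖z - y‖ ≤ ‖z - q‖ := by
        rw [hyz, ← dist_eq_norm]
        exact Metric.infDist_le_dist_of_mem hq
      exact pow_le_pow_left₀ (norm_nonneg _) this 2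
  have hderiv : HasFDerivAt (fun q => ‖z - q‖ ^ 2) _ y := ((hasFDerivAt_id y).const_sub z).norm_sq
  have hnonneg := hmin.hasFDerivWithinAt_nonneg hderiv.hasFDerivWithinAt he
  have hle : ⟪z - y, e⟫ ≤ 0 := by simpa [inner_sub_left] using hnonneg
  rw [real_inner_smul_left]
  exact mul_nonpos_of_nonneg_of_nonpos ht hle

theorem mem_closure_regNormalBundle_of_mem_limNormal {Ω : Set E} {z v : E} (hz : z ∈ Ω)
    (hv : v ∈ limNormal Ω z) : (z, v) ∈ closure (regNormalBundle Ω) := by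
  obtain ⟨zk, vk, tk, yk, hzk, hvk, htk, hyk, hdist, hvt⟩ := hv
  refine mem_closure_of_tendsto
    ((tendsto_of_norm_sub_eq_infDist hz hzk hdist).prodMk_nhds hvk)
    (Eventually.of_forall fun k => ⟨hyk k, ?_⟩)
  rw [hvt k]
  exact smul_sub_mem_regNormal (htk k) (hdist k)

end RegularNormals

section Pairing

theorem inner_pmk {E F : Type*} [NormedAddCommGroup E] [InnerProductSpace ℝ E]
    [NormedAddCommGroup F] [InnerProductSpace ℝ F] (v : WithLp 2 (E × F)) (a : E) (b : F) :
    ⟪v, pmk a b⟫ = ⟪pfst v, a⟫ + ⟪psnd v, b⟫ := rfl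

variable {E F G : Type*} [NormedAddCommGroup E] [NormedAddCommGroup F] [NormedAddCommGroup G]

theorem continuous_pfst : Continuous (pfst : WithLp 2 (E × F) → E) :=
  continuous_fst.comp (WithLp.prod_continuous_ofLp 2 E F)

theorem continuous_psnd : Continuous (psnd : WithLp 2 (E × F) → F) :=
  continuous_snd.comp (WithLp.prod_continuous_ofLp 2 E F)

theorem continuous_pmk : Continuous fun q : E × F => pmk q.1 q.2 :=
  WithLp.prod_continuous_toLp 2 E F

variable [NormedSpace ℝ E] [NormedSpace ℝ F] [NormedSpace ℝ G]

/-- `pmkL A B` is the continuous linear map `e ↦ pmk (A e) (B e)`. -/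
def pmkL (A : G →L[ℝ] E) (B : G →L[ℝ] F) : G →L[ℝ] WithLp 2 (E × F) :=
  (WithLp.prodContinuousLinearEquiv 2 ℝ E F).symm.toContinuousLinearMap ∘L A.prod B

theorem hasFDerivAt_pmk {f : G → E} {h : G → F} {f' : G →L[ℝ] E} {h' : G →L[ℝ] F} {y : G}
    (hf : HasFDerivAt f f' y) (hh : HasFDerivAt h h' y) :
    HasFDerivAt (fun q => pmk (f q) (h q)) (pmkL f' h') y :=
  (WithLp.prodContinuousLinearEquiv 2 ℝ E F).symm.toContinuousLinearMap.hasFDerivAt.comp y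
    (hf.prodMk hh)

end Pairing

section SumRule

variable {P N : Type*} [NormedAddCommGroup P] [InnerProductSpace ℝ P]
  [NormedAddCommGroup N] [InnerProductSpace ℝ N]

/-- The graph of a set-valued map. -/
def svGraph (G : P → Set N) : Set (WithLp 2 (P × N)) :=
  {q | psnd q ∈ G (pfst q)}

/-- The sum `p ↦ G p + g p` of a set-valued map and a single-valued one. -/
def svAdd (G : P → Set N) (g : P → N) (p : P) : Set N :=
  {ω | ∃ v ∈ G p, ω = v + g p}

variable [CompleteSpace P] [CompleteSpace N]

/-- The map carrying a point `y` of the graph of `svAdd G g` and a normal vector `ν` there to the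
corresponding point `(y₁, y₂ - g y₁)` of the graph of `G` and normal vector
`(ν₁ + Dg(y₁)* ν₂, ν₂)`. -/
def unshear (g : P → N) (q : WithLp 2 (P × N) × WithLp 2 (P × N)) :
    WithLp 2 (P × N) × WithLp 2 (P × N) :=
  (pmk (pfst q.1) (psnd q.1 - g (pfst q.1)),
    pmk (pfst q.2 + (fderiv ℝ g (pfst q.1)).adjoint (psnd q.2)) (psnd q.2))

theorem unshear_mem_regNormalBundle {G : P → Set N} {g : P → N}
    {q : WithLp 2 (P × N) × WithLp 2 (P × N)} (hg : DifferentiableAt ℝ g (pfst q.1))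
    (hq : q ∈ regNormalBundle (svGraph (svAdd G g))) :
    unshear g q ∈ regNormalBundle (svGraph G) := by
  obtain ⟨⟨v, hv, hqv⟩, hν⟩ := hq
  have hsub : psnd q.1 - g (pfst q.1) = v := by rw [hqv, add_sub_cancel_right]
  have hshear : pmk (pfst q.1) (psnd q.1 - g (pfst q.1) + g (pfst q.1)) = q.1 := by
    rw [sub_add_cancel]
    rfl
  have hgfst : HasFDerivAt (fun y : WithLp 2 (P × N) => g (pfst y))
      (fderiv ℝ g (pfst q.1) ∘L WithLp.fstL 2 ℝ P N) (unshear g q).1 :=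
    hg.hasFDerivAt.comp (unshear g q).1 (WithLp.fstL 2 ℝ P N).hasFDerivAt
  have hderiv := hasFDerivAt_pmk (WithLp.fstL 2 ℝ P N).hasFDerivAt
    ((WithLp.sndL 2 ℝ P N).hasFDerivAt.add hgfst)
  refine ⟨by rw [← hsub] at hv; exact hv,
    mem_regNormal_of_hasFDerivAt (Ω' := svGraph (svAdd G g)) (v' := q.2) hderiv
      (fun y hy => ⟨_, hy, rfl⟩) (by rw [← hshear] at hν; exact hν) fun e => ?_⟩
  change ⟪pfst q.2 + (fderiv ℝ g (pfst q.1)).adjoint (psnd q.2), pfst e⟫ + ⟪psnd q.2, psnd e⟫ =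
    ⟪pfst q.2, pfst e⟫ + ⟪psnd q.2, psnd e + fderiv ℝ g (pfst q.1) (pfst e)⟫
  rw [inner_add_left, ContinuousLinearMap.adjoint_inner_left, inner_add_right]
  ring

theorem continuousAt_unshear {g : P → N} {q : WithLp 2 (P × N) × WithLp 2 (P × N)}
    (hg : ContDiffAt ℝ 1 g (pfst q.1)) : ContinuousAt (unshear g) q := by
  have hfst : Tendsto (fun q' : WithLp 2 (P × N) × WithLp 2 (P × N) => pfst q'.1) (𝓝 q)
      (𝓝 (pfst q.1)) := (continuous_pfst.comp continuous_fst).tendsto q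
  have hg_fst := hg.continuousAt.tendsto.comp hfst
  have hadjoint := (ContinuousLinearMap.adjoint.continuous.tendsto _).comp
    ((hg.continuousAt_fderiv one_ne_zero).tendsto.comp hfst)
  have hpsnd_fst : Continuous fun q' : WithLp 2 (P × N) × WithLp 2 (P × N) => psnd q'.1 :=
    continuous_psnd.comp continuous_fst
  have hpsnd_snd : Continuous fun q' : WithLp 2 (P × N) × WithLp 2 (P × N) => psnd q'.2 :=
    continuous_psnd.comp continuous_snd
  have hpfst_snd : Continuous fun q' : WithLp 2 (P × N) × WithLp 2 (P × N) => pfst q'.2 :=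
    continuous_pfst.comp continuous_snd
  refine Tendsto.prodMk_nhds ?_ ?_
  · exact (continuous_pmk.tendsto (_, _)).comp
      (hfst.prodMk_nhds ((hpsnd_fst.tendsto q).sub hg_fst))
  · exact (continuous_pmk.tendsto (_, _)).comp
      (((hpfst_snd.tendsto q).add
        (ContinuousAt.clm_apply hadjoint (hpsnd_snd.tendsto q))).prodMk_nhds (hpsnd_snd.tendsto q))

theorem unshear_mem_closure_regNormalBundle {G : P → Set N} {g : P → N}
    {q : WithLp 2 (P × N) × WithLp 2 (P × N)} (hg : ContDiffAt ℝ 1 g (pfst q.1))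
    (hq : q ∈ closure (regNormalBundle (svGraph (svAdd G g)))) :
    unshear g q ∈ closure (regNormalBundle (svGraph G)) := by
  have hdiff : ∀ᶠ q' in 𝓝 q, DifferentiableAt ℝ g (pfst q'.1) :=
    ((continuous_pfst.comp continuous_fst).tendsto q).eventually
      ((hg.eventually (by simp)).mono fun p hp => hp.differentiableAt one_ne_zero)
  rw [mem_closure_iff_frequently] at hq ⊢
  exact (continuousAt_unshear hg).tendsto.frequently
    ((hq.and_eventually hdiff).mono fun q' hq' => unshear_mem_regNormalBundle hq'.2 hq'.1)

end SumRule

section Polyhedron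

variable {E ι : Type*} [NormedAddCommGroup E] [InnerProductSpace ℝ E]

/-- The indices of the constraints of `polyhedron a c` that are active at `x`. -/
def activeSet (a : ι → E) (c : ι → ℝ) (x : E) : Set ι :=
  {j | ⟪a j, x⟫ = c j}

/-- The polyhedral cone of directions with nonpositive products against `a j` for `j ∈ I` and
nonnegative ones for `j ∈ J`. For `J ⊆ I` it is the critical cone of a polyhedron with active set
`I` at a normal vector that is a combination of the `a j`, `j ∈ I`, positive exactly on `J`. -/
def signCone (a : ι → E) (I J : Set ι) : Set E :=
  {h | (∀ j ∈ I, ⟪a j, h⟫ ≤ 0) ∧ ∀ j ∈ J, 0 ≤ ⟪a j, h⟫}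

variable {a : ι → E} {c : ι → ℝ} {I J : Set ι} {x v b h : E}

theorem isClosed_signCone : IsClosed (signCone a I J) := by
  simp only [signCone, ofPred_and, ofPred_forall]
  exact (isClosed_biInter fun j _ => isClosed_le (by fun_prop) (by fun_prop)).inter
    (isClosed_biInter fun j _ => isClosed_le (by fun_prop) (by fun_prop))

section Finite

variable [Finite ι]

theorem eventually_add_smul_mem_polyhedron (hx : x ∈ polyhedron a c)
    (hh : ∀ j ∈ activeSet a c x, ⟪a j, h⟫ ≤ 0) :
    ∀ᶠ τ in 𝓝[>] (0 : ℝ), x + τ • h ∈ polyhedron a c := by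
  refine eventually_all.2 fun j => ?_
  by_cases hj : j ∈ activeSet a c x
  · filter_upwards [self_mem_nhdsWithin] with τ (hτ : 0 < τ)
    rw [inner_add_right, inner_smul_right]
    linarith [hx j, mul_nonpos_of_nonneg_of_nonpos hτ.le (hh j hj)]
  · have hcont : Continuous fun τ : ℝ => ⟪a j, x + τ • h⟫ := by fun_prop
    have hlt : ⟪a j, x + (0 : ℝ) • h⟫ < c j := by simpa using (hx j).lt_of_ne hj
    exact nhdsWithin_le_nhds ((hcont.continuousAt.eventually_lt continuousAt_const hlt).mono
      fun τ hτ => hτ.le)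

theorem eventually_activeSet_subset (a : ι → E) (c : ι → ℝ) (x : E) :
    ∀ᶠ y in 𝓝 x, activeSet a c y ⊆ activeSet a c x := by
  refine (eventually_all.2 fun j => ?_ :
    ∀ᶠ y in 𝓝 x, ∀ j, j ∈ activeSet a c y → j ∈ activeSet a c x)
  by_cases hj : j ∈ activeSet a c x
  · exact Eventually.of_forall fun _ _ => hj
  · have hcont : ContinuousAt (fun y => ⟪a j, y⟫) x := by fun_prop
    exact (hcont.eventually_ne hj).mono fun y hne hy => absurd hy hne

theorem inner_nonpos_of_mem_convNormal_polyhedron (hv : v ∈ convNormal (polyhedron a c) x)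
    (hh : ∀ j ∈ activeSet a c x, ⟪a j, h⟫ ≤ 0) : ⟪v, h⟫ ≤ 0 := by
  obtain ⟨τ, hmem, hτ⟩ :=
    ((eventually_add_smul_mem_polyhedron hv.1 hh).and self_mem_nhdsWithin).exists
  have hτh : τ * ⟪v, h⟫ ≤ 0 := by
    simpa [inner_smul_right] using hv.2 _ hmem
  exact nonpos_of_mul_nonpos_right hτh hτ

theorem mem_hull_of_forall_mem_signCone (hb : ∀ h ∈ signCone a I J, ⟪b, h⟫ ≤ 0) :
    b ∈ PointedCone.hull ℝ (a '' I ∪ (fun j => -a j) '' J) := by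
  have hinj : Function.Injective (innerₗ E) := fun v v' hvv' =>
    ext_inner_right ℝ fun y => LinearMap.congr_fun hvv' y
  rw [← dual_flip_dual_of_finite hinj (toFinite _)]
  intro y hy
  have hmem : -y ∈ signCone a I J := by
    refine ⟨fun j hj => ?_, fun j hj => ?_⟩
    · simpa using hy (mem_union_left _ (mem_image_of_mem a hj))
    · simpa using hy (mem_union_right _ (mem_image_of_mem _ hj))
  simpa [real_inner_comm] using hb _ hmem

end Finite

variable [Fintype ι]

theorem exists_sum_smul_of_forall_mem_signCone (hb : ∀ h ∈ signCone a I J, ⟪b, h⟫ ≤ 0) :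
    ∃ l : ι → ℝ, (∀ j ∉ J, 0 ≤ l j) ∧ (∀ j ∉ I ∪ J, l j = 0) ∧ b = ∑ j, l j • a j := by
  classical
  replace hb := mem_hull_of_forall_mem_signCone hb
  induction hb using Submodule.span_induction with
  | mem b hb =>
    rcases hb with ⟨i, hi, rfl⟩ | ⟨i, hi, rfl⟩
    · refine ⟨Pi.single i 1, fun j _ => ?_, fun j hj => ?_, by simp [Pi.single_apply]⟩
      · exact (Pi.single_nonneg.2 (zero_le_one' ℝ) : (0 : ι → ℝ) ≤ Pi.single i 1) j
      · have hji : j ≠ i := fun hji => hj (.inl (by rwa [hji]))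
        simp [hji]
    · refine ⟨Pi.single i (-1), fun j hj => ?_, fun j hj => ?_, by simp [Pi.single_apply]⟩
      · have hji : j ≠ i := fun hji => hj (by rwa [hji])
        simp [hji]
      · have hji : j ≠ i := fun hji => hj (.inr (by rwa [hji]))
        simp [hji]
  | zero => exact ⟨0, by simp⟩
  | add _ _ _ _ h₁ h₂ =>
    obtain ⟨l₁, hpos₁, hzero₁, rfl⟩ := h₁
    obtain ⟨l₂, hpos₂, hzero₂, rfl⟩ := h₂
    exact ⟨l₁ + l₂, fun j hj => add_nonneg (hpos₁ j hj) (hpos₂ j hj),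
      fun j hj => by simp [hzero₁ j hj, hzero₂ j hj], by simp [add_smul, Finset.sum_add_distrib]⟩
  | smul r _ _ h =>
    obtain ⟨l, hpos, hzero, rfl⟩ := h
    exact ⟨(r : ℝ) • l, fun j hj => mul_nonneg r.2 (hpos j hj),
      fun j hj => by simp [hzero j hj], by simp [Finset.smul_sum, mul_smul]⟩

theorem mem_convNormal_polyhedron_iff :
    v ∈ convNormal (polyhedron a c) x ↔ x ∈ polyhedron a c ∧ ∃ l : ι → ℝ,
      (∀ j, 0 ≤ l j) ∧ (∀ j ∉ activeSet a c x, l j = 0) ∧ v = ∑ j, l j • a j := by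
  constructor
  · intro hv
    obtain ⟨l, hpos, hzero, hvl⟩ :=
      exists_sum_smul_of_forall_mem_signCone (I := activeSet a c x) (J := ∅) fun h hh =>
        inner_nonpos_of_mem_convNormal_polyhedron hv hh.1
    exact ⟨hv.1, l, by simpa using hpos, by simpa using hzero, hvl⟩
  · rintro ⟨hx, l, hpos, hzero, rfl⟩
    refine ⟨hx, fun y hy => ?_⟩
    rw [sum_inner]
    refine Finset.sum_nonpos fun j _ => ?_
    rw [real_inner_smul_left, inner_sub_right]
    by_cases hj : j ∈ activeSet a c x
    · have hjx : ⟪a j, x⟫ = c j := hj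
      exact mul_nonpos_of_nonneg_of_nonpos (hpos j) (by linarith [hy j])
    · simp [hzero j hj]

theorem sum_smul_add_smul_mem_convNormal_polyhedron {l : ι → ℝ} {i : ι} {r : ℝ}
    (hx : x ∈ polyhedron a c) (hpos : ∀ j, 0 ≤ l j) (hzero : ∀ j ∉ activeSet a c x, l j = 0)
    (hi : i ∈ activeSet a c x) (hr : 0 ≤ l i + r) :
    ∑ j, l j • a j + r • a i ∈ convNormal (polyhedron a c) x := by
  classical
  refine mem_convNormal_polyhedron_iff.2 ⟨hx, l + Pi.single i r, fun j => ?_, fun j hj => ?_, ?_⟩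
  · obtain rfl | hji := eq_or_ne j i
    · simpa using hr
    · simpa [hji] using hpos j
  · have hji : j ≠ i := fun hji => hj (hji ▸ hi)
    simp [hji, hzero j hj]
  · simp [add_smul, Finset.sum_add_distrib, Pi.single_apply]

theorem sum_smul_mem_convNormal_polyhedron_add_smul {l : ι → ℝ} {τ : ℝ} (hpos : ∀ j, 0 ≤ l j)
    (hzero : ∀ j ∉ activeSet a c x, l j = 0)
    (hh : h ∈ signCone a (activeSet a c x) {j | 0 < l j}) (hτ : x + τ • h ∈ polyhedron a c) :
    ∑ j, l j • a j ∈ convNormal (polyhedron a c) (x + τ • h) := by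
  refine mem_convNormal_polyhedron_iff.2 ⟨hτ, l, hpos, fun j hj => ?_, rfl⟩
  by_contra hlj
  have hactive : j ∈ activeSet a c x := not_imp_comm.1 (hzero j) hlj
  have hjh : ⟪a j, h⟫ = 0 := le_antisymm (hh.1 j hactive) (hh.2 j ((hpos j).lt_of_ne' hlj))
  refine hj ?_
  change ⟪a j, x + τ • h⟫ = c j
  rw [inner_add_right, inner_smul_right, hjh, mul_zero, add_zero]
  exact hactive

end Polyhedron

section NormalConeMap

variable {E U ι : Type*} [NormedAddCommGroup E] [InnerProductSpace ℝ E]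
  [NormedAddCommGroup U] [InnerProductSpace ℝ U]

/-- The set-valued map `(x, u) ↦ N(x; polyhedron a c)`. -/
def polyNormalMap (U : Type*) [NormedAddCommGroup U] (a : ι → E) (c : ι → ℝ)
    (p : WithLp 2 (E × U)) : Set E :=
  convNormal (polyhedron a c) (pfst p)

/-- The vectors `((b, 0), h)` with `h` in the cone `signCone a I J` and `b` in its polar. -/
def signNormal (U : Type*) [NormedAddCommGroup U] [InnerProductSpace ℝ U] (a : ι → E)
    (I J : Set ι) : Set (WithLp 2 (WithLp 2 (E × U) × E)) :=
  {ν | (∀ h ∈ signCone a I J, ∀ k, ⟪pfst ν, pmk h k⟫ ≤ 0) ∧ psnd ν ∈ signCone a I J}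

variable {a : ι → E} {c : ι → ℝ}

theorem isClosed_signNormal (I J : Set ι) : IsClosed (signNormal U a I J) := by
  simp only [signNormal, ofPred_and, ofPred_forall]
  refine IsClosed.inter ?_ (isClosed_signCone.preimage continuous_psnd)
  exact isClosed_biInter fun h _ => isClosed_iInter fun k =>
    isClosed_le (continuous_pfst.inner continuous_const) continuous_const

theorem exists_eq_pmk_of_mem_signNormal [Fintype ι] {I J : Set ι} (hJ : J ⊆ I)
    {ξ : WithLp 2 (E × U)} {h : E} (hξ : pmk ξ h ∈ signNormal U a I J) :
    ∃ γ : ι → ℝ, (∀ j ∉ J, 0 ≤ γ j) ∧ (∀ j ∉ I, γ j = 0) ∧ ξ = pmk (∑ j, γ j • a j) 0 := by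
  have hpolar : ∀ h ∈ signCone a I J, ∀ k, ⟪pfst ξ, h⟫ + ⟪psnd ξ, k⟫ ≤ 0 := hξ.1
  obtain ⟨γ, hpos, hzero, hγ⟩ := exists_sum_smul_of_forall_mem_signCone fun h hh => by
    simpa using hpolar h hh 0
  have hsnd : psnd ξ = 0 :=
    real_inner_self_nonpos.1 (by simpa using hpolar 0 (by simp [signCone]) (psnd ξ))
  refine ⟨γ, hpos, fun j hj => hzero j (by rwa [union_eq_left.2 hJ]), ?_⟩
  rw [← hγ, ← hsnd]
  rfl

variable [Finite ι]

theorem exists_mem_signNormal_of_mem_regNormalBundle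
    {q : WithLp 2 (WithLp 2 (E × U) × E) × WithLp 2 (WithLp 2 (E × U) × E)}
    (hq : q ∈ regNormalBundle (svGraph (polyNormalMap U a c))) :
    ∃ J ⊆ activeSet a c (pfst (pfst q.1)),
      q.2 ∈ signNormal U a (activeSet a c (pfst (pfst q.1))) J := by
  cases nonempty_fintype ι
  obtain ⟨hgraph, hν⟩ := hq
  obtain ⟨hx, l, hpos, hzero, hv⟩ := mem_convNormal_polyhedron_iff.1 hgraph
  set x := pfst (pfst q.1)
  have hactive : {j | 0 < l j} ⊆ activeSet a c x := fun j hj => not_imp_comm.1 (hzero j) hj.ne'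
  have hdual (i : ι) (s : ℝ) (hi : i ∈ activeSet a c x)
      (hs : ∀ᶠ τ in 𝓝[>] (0 : ℝ), 0 ≤ l i + τ * s) : s * ⟪psnd q.2, a i⟫ ≤ 0 := by
    have hline : ∀ᶠ τ in 𝓝[>] (0 : ℝ),
        q.1 + τ • pmk 0 (s • a i) ∈ svGraph (polyNormalMap U a c) := hs.mono fun τ hτ => by
      change psnd q.1 + τ • s • a i ∈ convNormal _ (pfst (pfst q.1 + τ • 0))
      rw [smul_zero, add_zero, hv, smul_smul]
      exact sum_smul_add_smul_mem_convNormal_polyhedron hx hpos hzero hi hτ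
    have hle := inner_nonpos_of_mem_regNormal hν hline
    rwa [inner_pmk, inner_zero_right, zero_add, inner_smul_right] at hle
  refine ⟨{j | 0 < l j}, hactive, fun h hh k => ?_, fun j hj => ?_, fun j hj => ?_⟩
  · have hline : ∀ᶠ τ in 𝓝[>] (0 : ℝ),
        q.1 + τ • pmk (pmk h k) 0 ∈ svGraph (polyNormalMap U a c) :=
      (eventually_add_smul_mem_polyhedron hx hh.1).mono fun τ hτ => by
        change psnd q.1 + τ • 0 ∈ convNormal _ (x + τ • h)
        rw [smul_zero, add_zero, hv]
        exact sum_smul_mem_convNormal_polyhedron_add_smul hpos hzero hh hτ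
    have hle := inner_nonpos_of_mem_regNormal hν hline
    rwa [inner_pmk, inner_zero_right, add_zero] at hle
  · rw [real_inner_comm]
    simpa using hdual j 1 hj (eventually_mem_nhdsWithin.mono fun τ (hτ : 0 < τ) => by
      linarith [hpos j])
  · rw [real_inner_comm]
    have hsmall : ∀ᶠ τ in 𝓝[>] (0 : ℝ), τ < l j := nhdsWithin_le_nhds (Iio_mem_nhds hj)
    simpa using hdual j (-1) (hactive hj) (hsmall.mono fun τ hτ => by linarith)

theorem exists_mem_signNormal_of_mem_closure_regNormalBundle
    {q : WithLp 2 (WithLp 2 (E × U) × E) × WithLp 2 (WithLp 2 (E × U) × E)}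
    (hq : q ∈ closure (regNormalBundle (svGraph (polyNormalMap U a c)))) :
    ∃ I ⊆ activeSet a c (pfst (pfst q.1)), ∃ J ⊆ I, q.2 ∈ signNormal U a I J := by
  have hactive : ∀ᶠ q' in 𝓝 q,
      activeSet a c (pfst (pfst q'.1)) ⊆ activeSet a c (pfst (pfst q.1)) :=
    ((continuous_pfst.comp (continuous_pfst.comp continuous_fst)).tendsto q).eventually
      (eventually_activeSet_subset a c _)
  have hclosed : IsClosed (⋃ I ∈ {I | I ⊆ activeSet a c (pfst (pfst q.1))}, ⋃ J ∈ {J | J ⊆ I},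
      signNormal U a I J) :=
    (toFinite _).isClosed_biUnion fun I _ => (toFinite _).isClosed_biUnion fun J _ =>
      isClosed_signNormal I J
  have hfreq := (mem_closure_iff_frequently.1 hq).and_eventually hactive
  have hmem := hclosed.mem_of_frequently_of_tendsto (hfreq.mono fun q' hq' => ?_)
    (continuous_snd.tendsto q)
  · simpa only [mem_iUnion, mem_ofPred_eq, exists_prop] using hmem
  · obtain ⟨J, hJ, hν⟩ := exists_mem_signNormal_of_mem_regNormalBundle hq'.1
    exact mem_biUnion hq'.2 (mem_biUnion hJ hν)

end NormalConeMap

section Coderivative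

variable {E U : Type*} [NormedAddCommGroup E] [InnerProductSpace ℝ E] [CompleteSpace E]
  [NormedAddCommGroup U] [InnerProductSpace ℝ U] [CompleteSpace U]

theorem inner_pfst_adjoint (L : WithLp 2 (E × U) →L[ℝ] E) (w h : E) :
    ⟪pfst (L.adjoint w), h⟫ = ⟪w, L (pmk h 0)⟫ := by
  rw [← ContinuousLinearMap.adjoint_inner_left, inner_pmk, inner_zero_right, add_zero]

theorem inner_psnd_adjoint (L : WithLp 2 (E × U) →L[ℝ] E) (w : E) (k : U) :
    ⟪psnd (L.adjoint w), k⟫ = ⟪w, L (pmk 0 k)⟫ := by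
  rw [← ContinuousLinearMap.adjoint_inner_left, inner_pmk, inner_zero_right, zero_add]

variable {ι : Type*}

theorem exists_mem_signNormal_of_mem_coderiv [Finite ι] {a : ι → E} {c : ι → ℝ}
    {p : WithLp 2 (E × U)} {g : WithLp 2 (E × U) → E} {ω w : E} {z : WithLp 2 (E × U)}
    (hg : ContDiffAt ℝ 1 g p) (hω : ω ∈ svAdd (polyNormalMap U a c) g p)
    (hz : z ∈ coderiv (svAdd (polyNormalMap U a c) g) p ω w) :
    ∃ I ⊆ activeSet a c (pfst p), ∃ J ⊆ I,
      pmk (z - (fderiv ℝ g p).adjoint w) (-w) ∈ signNormal U a I J := by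
  have hν := exists_mem_signNormal_of_mem_closure_regNormalBundle
    (unshear_mem_closure_regNormalBundle (q := (pmk p ω, pmk z (-w))) hg
      (mem_closure_regNormalBundle_of_mem_limNormal hω hz))
  change ∃ I ⊆ activeSet a c (pfst p), ∃ J ⊆ I,
    pmk (z + (fderiv ℝ g p).adjoint (-w)) (-w) ∈ signNormal U a I J at hν
  rwa [map_neg, ← sub_eq_add_neg] at hν

theorem statement2_general [Fintype ι] {a : ι → E} {c : ι → ℝ} {p : WithLp 2 (E × U)}
    {g : WithLp 2 (E × U) → E} {ω w : E} {z : WithLp 2 (E × U)} (hg : ContDiffAt ℝ 1 g p)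
    (hω : ω ∈ svAdd (polyNormalMap U a c) g p)
    (hz : z ∈ coderiv (svAdd (polyNormalMap U a c) g) p ω w) :
    ∃ γ : ι → ℝ, (∀ j, (⟪a j, pfst p⟫ = c j ∧ 0 < ⟪a j, w⟫) → 0 ≤ γ j) ∧
      (∀ j, ¬(⟪a j, pfst p⟫ = c j ∧ 0 ≤ ⟪a j, w⟫) → γ j = 0) ∧
      z = pmk (pfst ((fderiv ℝ g p).adjoint w) + ∑ j, γ j • a j)
        (psnd ((fderiv ℝ g p).adjoint w)) := by
  obtain ⟨I, hI, J, hJ, hν⟩ := exists_mem_signNormal_of_mem_coderiv hg hω hz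
  obtain ⟨γ, hpos, hzero, hγ⟩ := exists_eq_pmk_of_mem_signNormal hJ hν
  have hw : -w ∈ signCone a I J := hν.2
  have hwI (j) (hj : j ∈ I) : 0 ≤ ⟪a j, w⟫ := by simpa using hw.1 j hj
  have hwJ (j) (hj : j ∈ J) : ⟪a j, w⟫ ≤ 0 := by simpa using hw.2 j hj
  refine ⟨γ, fun j hj => hpos j fun hjJ => (hwJ j hjJ).not_gt hj.2,
    fun j hj => hzero j fun hjI => hj ⟨hI hjI, hwI j hjI⟩, ?_⟩
  rw [← sub_add_cancel z ((fderiv ℝ g p).adjoint w), hγ, add_comm]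
  conv_rhs => rw [← add_zero (psnd _)]
  rfl

end Coderivative

/-- form of coderivative elements of `F(x,u) = N(x;C) + g(x,u)` for a
smooth perturbation `g` under PLICQ. -/
theorem statement2 (n d s : ℕ)
    (xs : Fin s → Euc n) (c : Fin s → ℝ)
    (C : Set (Euc n)) (hC : C = {x | ∀ j, ⟪xs j, x⟫ ≤ c j})
    (x : Euc n) (hx : x ∈ C)
    (hPLICQ : ∀ α : Fin s → ℝ, (∀ j, 0 ≤ α j) →
      (∀ j, ⟪xs j, x⟫ ≠ c j → α j = 0) → (∑ j, α j • xs j) = 0 → ∀ j, α j = 0)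
    (u : Euc d)
    (g : WithLp 2 (Euc n × Euc d) → Euc n)
    (V : Set (WithLp 2 (Euc n × Euc d))) (hV : V ∈ nhds (pmk x u))
    (hgC1 : ContDiffOn ℝ 1 g V)
    (F : WithLp 2 (Euc n × Euc d) → Set (Euc n))
    (hF : ∀ p, F p = {ω | ∃ v ∈ convNormal C (pfst p), ω = v + g p})
    (ω : Euc n) (hω : ∃ v ∈ convNormal C x, ω = g (pmk x u) + v)
    (w : Euc n) (z : WithLp 2 (Euc n × Euc d))
    (hz : z ∈ coderiv F (pmk x u) ω w) :
    ∃ (γ : Fin s → ℝ) (a : Euc n) (b : Euc d),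
      (∀ j, (⟪xs j, x⟫ = c j ∧ 0 < ⟪xs j, w⟫) → 0 ≤ γ j) ∧
      (∀ j, ¬(⟪xs j, x⟫ = c j ∧ 0 ≤ ⟪xs j, w⟫) → γ j = 0) ∧
      (∀ h : Euc n, ⟪a, h⟫ = ⟪w, fderiv ℝ g (pmk x u) (pmk h (0 : Euc d))⟫) ∧
      (∀ k : Euc d, ⟪b, k⟫ = ⟪w, fderiv ℝ g (pmk x u) (pmk (0 : Euc n) k)⟫) ∧
      z = pmk (a + ∑ j, γ j • xs j) b := by
  obtain rfl : F = svAdd (polyNormalMap (Euc d) xs c) g := by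
    subst hC
    exact funext hF
  subst hC
  obtain ⟨v, hv, rfl⟩ := hω
  obtain ⟨γ, hpos, hzero, hz⟩ :=
    statement2_general (hgC1.contDiffAt hV) ⟨v, hv, add_comm _ _⟩ hz
  exact ⟨γ, _, _, hpos, hzero, inner_pfst_adjoint _ w, inner_psnd_adjoint _ w, hz⟩
end
end
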